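/- arXiv:math/0011026 — 2 statements merged into one kernel-verified Lean document; each statement's English description precedes it below -/
import Mathlib

section
/- For k ≥ 2, the set C_k^{>++} := { (a,b) ∈ ℝ⁺ × ℝ⁺ : Φ_k^>(a,b)(T₁) = T₂ } is nonempty if and only if lim_{a,b→+∞} Φ_k^>(a,b)(T₁) < T₂. -/
open Set Filter Classical

noncomputable section

/-- `u c s` is the solution of `-(p·u')' + q·u = c·w·u` with `u c s s = 0` and
`(u c s)' s = 1/(p s)`; `u'` is its `t`-derivative. -/
def IsSolFamily (p q w : ℝ → ℝ) (u u' : ℝ → ℝ → ℝ → ℝ) : Prop :=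
  ∀ c s : ℝ, u c s s = 0 ∧ u' c s s = 1 / p s ∧
    ∀ t : ℝ, HasDerivAt (u c s) (u' c s t) t ∧
      HasDerivAt (fun τ => p τ * u' c s τ) (q t * u c s t - c * w t * u c s t) t

/-- Zero set of `u c s` strictly after `s`. -/
def zeroSet (u : ℝ → ℝ → ℝ → ℝ) (c s : ℝ) : Set ℝ := {t | s < t ∧ u c s t = 0}

/-- The zero-function `φ_c(s)`, valued in `EReal` (equal to `⊤` when `u c s`
never vanishes after `s`). -/
noncomputable def phiE (u : ℝ → ℝ → ℝ → ℝ) (c s : ℝ) : EReal :=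
  if (zeroSet u c s).Nonempty then ((sInf (zeroSet u c s) : ℝ) : EReal) else ⊤

/-- The zero-function as a map `EReal → EReal` (`⊤` propagates). -/
noncomputable def phiStep (u : ℝ → ℝ → ℝ → ℝ) (c : ℝ) (x : EReal) : EReal :=
  if x = ⊤ ∨ x = ⊥ then ⊤ else phiE u c x.toReal

/-- `Φ_k^>(a,b)`: composition of `k` alternating zero-functions `φ_a^m, φ_b^n`,
starting with `φ_a^m`. -/
noncomputable def PhiGt (uM uN : ℝ → ℝ → ℝ → ℝ) (a b : ℝ) : ℕ → EReal → EReal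
  | 0 => id
  | k + 1 => (if k % 2 = 0 then phiStep uM a else phiStep uN b) ∘ PhiGt uM uN a b k

/-- `Φ_k^<(a,b)`: composition of `k` alternating zero-functions, starting with
`φ_b^n`. -/
noncomputable def PhiLt (uM uN : ℝ → ℝ → ℝ → ℝ) (a b : ℝ) : ℕ → EReal → EReal
  | 0 => id
  | k + 1 => (if k % 2 = 0 then phiStep uN b else phiStep uM a) ∘ PhiLt uM uN a b k

/-- `C_k^{>++} = {(a,b) ∈ ℝ⁺×ℝ⁺ : Φ_k^>(a,b)(T₁) = T₂}`. -/
def CGt (uM uN : ℝ → ℝ → ℝ → ℝ) (T₁ T₂ : ℝ) (k : ℕ) : Set (ℝ × ℝ) :=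
  {ab | 0 < ab.1 ∧ 0 < ab.2 ∧ PhiGt uM uN ab.1 ab.2 k (T₁ : EReal) = (T₂ : EReal)}

/-- `C_k^{<++} = {(a,b) ∈ ℝ⁺×ℝ⁺ : Φ_k^<(a,b)(T₁) = T₂}`. -/
def CLt (uM uN : ℝ → ℝ → ℝ → ℝ) (T₁ T₂ : ℝ) (k : ℕ) : Set (ℝ × ℝ) :=
  {ab | 0 < ab.1 ∧ 0 < ab.2 ∧ PhiLt uM uN ab.1 ab.2 k (T₁ : EReal) = (T₂ : EReal)}

section helpers

variable {p q w : ℝ → ℝ} {u u' : ℝ → ℝ → ℝ → ℝ}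

lemma sol_cont (H : IsSolFamily p q w u u') (c s : ℝ) : Continuous (u c s) :=
  continuous_iff_continuousAt.2 fun t => ((H c s).2.2 t).1.continuousAt

/-- Near the diagonal, the derivative is positive. -/
lemma near_pos (hq : Continuous q) (hw : Continuous w) (hppos : ∀ t, 0 < p t)
    (H : IsSolFamily p q w u u')
    (hc : Continuous fun x : ℝ × ℝ × ℝ => u x.1 x.2.1 x.2.2) (c s : ℝ) :
    ∃ ε > 0, ∀ c' s' t, |c' - c| < ε → |s' - s| < ε → |t - s| < ε → 0 < u' c' s' t := by
  have hg : Continuous fun x : ℝ × ℝ × ℝ =>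
      q x.2.2 * u x.1 x.2.1 x.2.2 - x.1 * w x.2.2 * u x.1 x.2.1 x.2.2 := by
    fun_prop
  have h0 := Metric.continuousAt_iff.1 (hg.continuousAt (x := (c, s, s))) 1 one_pos
  obtain ⟨δ, hδ, h⟩ := h0
  have huss : u c s s = 0 := (H c s).1
  refine ⟨min δ (1/4), by positivity, ?_⟩
  intro c' s' t h1 h2 h3
  rw [lt_min_iff] at h1 h2 h3
  have hb : ∀ τ ∈ Metric.ball s (min δ (1/4)),
      ‖q τ * u c' s' τ - c' * w τ * u c' s' τ‖ ≤ 1 := by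
    intro τ hτ
    rw [Metric.mem_ball, Real.dist_eq, lt_min_iff] at hτ
    have := h (x := (c', s', τ)) (by
      simp only [Prod.dist_eq, Real.dist_eq, max_lt_iff]
      exact ⟨h1.1, h2.1, hτ.1⟩)
    simp only [huss, Real.dist_eq, mul_zero, sub_zero] at this
    exact this.le
  have hmv := (convex_ball s (min δ (1/4))).norm_image_sub_le_of_norm_hasDerivWithin_le
    (f := fun τ => p τ * u' c' s' τ) (x := s') (y := t)
    (fun τ _ => ((H c' s').2.2 τ).2.hasDerivWithinAt) hb
    (by rw [Metric.mem_ball, Real.dist_eq, lt_min_iff]; exact h2)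
    (by rw [Metric.mem_ball, Real.dist_eq, lt_min_iff]; exact h3)
  have hs' : p s' * u' c' s' s' = 1 := by
    rw [(H c' s').2.1]; field_simp [(hppos s').ne']
  simp only [hs', Real.norm_eq_abs, one_mul] at hmv
  have h4 : |t - s'| < 1/2 := by
    have := abs_lt.1 h2.2; have := abs_lt.1 h3.2
    rw [abs_lt]; constructor <;> linarith
  have h5 : 0 < p t * u' c' s' t := by
    have := (abs_le.1 (hmv.trans h4.le)).1
    linarith
  exact (pos_iff_pos_of_mul_pos h5).1 (hppos t)

lemma near_u_pos (hq : Continuous q) (hw : Continuous w) (hppos : ∀ t, 0 < p t)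
    (H : IsSolFamily p q w u u')
    (hc : Continuous fun x : ℝ × ℝ × ℝ => u x.1 x.2.1 x.2.2) (c s : ℝ) :
    ∃ ε > 0, ∀ c' s' t, |c' - c| < ε → |s' - s| < ε → |t - s| < ε → s' < t →
      0 < u c' s' t := by
  obtain ⟨ε, hε, h⟩ := near_pos hq hw hppos H hc c s
  refine ⟨ε, hε, ?_⟩
  intro c' s' t h1 h2 h3 hst
  obtain ⟨y, hy, hy'⟩ := exists_hasDerivAt_eq_slope (u c' s') (u' c' s') hst
    (sol_cont H c' s').continuousOn (fun x _ => ((H c' s').2.2 x).1)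
  have hpos : 0 < u' c' s' y := by
    apply h c' s' y h1 h2
    have := abs_lt.1 h2; have := abs_lt.1 h3
    rw [abs_lt]; constructor <;> linarith [hy.1, hy.2]
  rw [hy', (H c' s').1, sub_zero] at hpos
  have : 0 < t - s' := sub_pos.2 hst
  exact (div_pos_iff_of_pos_right this).1 hpos

/-- Constancy of the Wronskian. -/
lemma wronskian (H : IsSolFamily p q w u u') (hppos : ∀ t, 0 < p t) (c s r x y : ℝ) :
    p x * u' c s x * u c r x - u c s x * (p x * u' c r x) =
    p y * u' c s y * u c r y - u c s y * (p y * u' c r y) := by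
  have hd : ∀ t, HasDerivAt (fun t => p t * u' c s t * u c r t - u c s t * (p t * u' c r t)) 0 t := by
    intro t
    have h1 := (H c s).2.2 t
    have h2 := (H c r).2.2 t
    have := (h1.2.mul h2.1).sub (h1.1.mul h2.2)
    refine this.congr_deriv ?_
    ring
  exact is_const_of_deriv_eq_zero (fun t => (hd t).differentiableAt) (fun t => (hd t).deriv) x y

lemma pu_init (H : IsSolFamily p q w u u') (hppos : ∀ t, 0 < p t) (c s : ℝ) :
    p s * u' c s s = 1 := by
  rw [(H c s).2.1]; field_simp [(hppos s).ne']

lemma simple_zero (hq : Continuous q) (hw : Continuous w) (hppos : ∀ t, 0 < p t)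
    (H : IsSolFamily p q w u u')
    (hc : Continuous fun x : ℝ × ℝ × ℝ => u x.1 x.2.1 x.2.2) {c s t : ℝ}
    (h0 : u c s t = 0) : u' c s t ≠ 0 := by
  intro h1
  have key : ∀ r, u c r s = 0 := by
    intro r
    have := wronskian H hppos c s r s t
    rw [h0, h1, pu_init H hppos, (H c s).1] at this
    linarith
  obtain ⟨ε, hε, h⟩ := near_u_pos hq hw hppos H hc c s
  have := h c (s - ε/2) s (by simpa using hε) (by
    rw [abs_lt]; constructor <;> linarith) (by simpa using hε) (by linarith)
  rw [key] at this
  exact lt_irrefl _ this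

lemma phiE_le {c s t : ℝ} (hst : s < t) (h : u c s t = 0) : phiE u c s ≤ (t : EReal) := by
  have hmem : t ∈ zeroSet u c s := ⟨hst, h⟩
  unfold phiE
  rw [if_pos ⟨t, hmem⟩]
  exact EReal.coe_le_coe_iff.2 (csInf_le ⟨s, fun y hy => hy.1.le⟩ hmem)

lemma pos_of_no_zero (hq : Continuous q) (hw : Continuous w) (hppos : ∀ t, 0 < p t)
    (H : IsSolFamily p q w u u')
    (hc : Continuous fun x : ℝ × ℝ × ℝ => u x.1 x.2.1 x.2.2) {c s t : ℝ} (hst : s < t)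
    (h : ∀ τ, s < τ → τ ≤ t → u c s τ ≠ 0) : 0 < u c s t := by
  obtain ⟨ε, hε, he⟩ := near_u_pos hq hw hppos H hc c s
  by_contra hn
  push Not at hn
  have hx1 : s < min t (s + ε/2) := lt_min hst (by linarith)
  have hx2 : min t (s + ε/2) ≤ t := min_le_left _ _
  have hx3 : min t (s + ε/2) ≤ s + ε/2 := min_le_right _ _
  set x := min t (s + ε/2)
  have hxp : 0 < u c s x := he c s x (by simpa using hε) (by simpa using hε)
    (by rw [abs_lt]; constructor <;> linarith) hx1
  obtain ⟨y, hy, hy0⟩ := intermediate_value_Icc' hx2 (sol_cont H c s).continuousOn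
    (show (0:ℝ) ∈ Icc _ _ from ⟨hn, hxp.le⟩)
  exact h y (hx1.trans_le hy.1) hy.2 hy0

lemma phiE_cases (hq : Continuous q) (hw : Continuous w) (hppos : ∀ t, 0 < p t)
    (H : IsSolFamily p q w u u')
    (hc : Continuous fun x : ℝ × ℝ × ℝ => u x.1 x.2.1 x.2.2) (c s : ℝ) :
    (phiE u c s = ⊤ ∧ ∀ t, s < t → 0 < u c s t) ∨
    ∃ t₀, s < t₀ ∧ phiE u c s = (t₀ : EReal) ∧ u c s t₀ = 0 ∧
      ∀ t, s < t → t < t₀ → 0 < u c s t := by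
  by_cases hne : (zeroSet u c s).Nonempty
  · right
    obtain ⟨ε, hε, he⟩ := near_u_pos hq hw hppos H hc c s
    have heq : zeroSet u c s = {t | s + ε ≤ t} ∩ {t | u c s t = 0} := by
      ext t
      constructor
      · rintro ⟨h1, h2⟩
        refine ⟨?_, h2⟩
        by_contra hlt
        simp only [mem_ofPred_eq, not_le] at hlt
        have := he c s t (by simpa using hε) (by simpa using hε)
          (by rw [abs_lt]; constructor <;> linarith) h1
        exact this.ne' h2
      · rintro ⟨h1, h2⟩
        simp only [mem_ofPred_eq] at h1
        exact ⟨by linarith, h2⟩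
    have hcl : IsClosed (zeroSet u c s) := by
      rw [heq]
      exact (isClosed_le continuous_const continuous_id).inter
        (isClosed_eq (sol_cont H c s) continuous_const)
    have hbdd : BddBelow (zeroSet u c s) := ⟨s, fun y hy => hy.1.le⟩
    have hmem := hcl.csInf_mem hne hbdd
    refine ⟨sInf (zeroSet u c s), hmem.1, ?_, hmem.2, ?_⟩
    · unfold phiE; rw [if_pos hne]
    · intro t h1 h2
      refine pos_of_no_zero hq hw hppos H hc h1 ?_
      intro τ h3 h4 h5
      have := csInf_le hbdd (show τ ∈ zeroSet u c s from ⟨h3, h5⟩)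
      linarith
  · left
    refine ⟨by unfold phiE; rw [if_neg hne], ?_⟩
    intro t ht
    exact pos_of_no_zero hq hw hppos H hc ht fun τ h1 _ h2 => hne ⟨τ, h1, h2⟩

lemma deriv_nonpos_of_first_zero (H : IsSolFamily p q w u u') {c s t₀ : ℝ} (hst : s < t₀)
    (h0 : u c s t₀ = 0) (hpos : ∀ t, s < t → t < t₀ → 0 < u c s t) : u' c s t₀ ≤ 0 := by
  have hd := ((H c s).2.2 t₀).1
  have := (hasDerivAt_iff_tendsto_slope.1 hd).mono_left
    (nhdsWithin_mono t₀ (show Iio t₀ ⊆ {t₀}ᶜ from fun x hx => ne_of_lt hx))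
  refine le_of_tendsto this ?_
  filter_upwards [Ioo_mem_nhdsLT hst] with t ht
  rw [slope_def_field, h0]
  have := hpos t ht.1 ht.2
  apply div_nonpos_of_nonneg_of_nonpos <;> linarith [ht.2]

/-- Sturm separation. -/
lemma phiE_mono (hq : Continuous q) (hw : Continuous w) (hppos : ∀ t, 0 < p t)
    (H : IsSolFamily p q w u u')
    (hc : Continuous fun x : ℝ × ℝ × ℝ => u x.1 x.2.1 x.2.2) (c : ℝ) {s s' : ℝ} (hs : s ≤ s') :
    phiE u c s ≤ phiE u c s' := by
  rcases hs.eq_or_lt with rfl | hs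
  · exact le_rfl
  rcases phiE_cases hq hw hppos H hc c s' with h | ⟨t₀, h1, h2, h3, h4⟩
  · rw [h.1]; exact le_top
  rw [h2]
  by_contra hlt
  push Not at hlt
  have hv : ∀ t, s < t → t ≤ t₀ → 0 < u c s t := by
    intro t ht1 ht2
    refine pos_of_no_zero hq hw hppos H hc ht1 ?_
    intro τ h5 h6 h7
    have := (hlt.trans_le (phiE_le h5 h7))
    rw [EReal.coe_lt_coe_iff] at this
    linarith
  have hW := wronskian H hppos c s' s s' t₀
  rw [h3, pu_init H hppos, (H c s').1] at hW
  have h5 := deriv_nonpos_of_first_zero H h1 h3 h4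
  have h6 := hv s' hs h1.le
  have h7 := hv t₀ (hs.trans h1) le_rfl
  have : p t₀ * u' c s' t₀ * u c s t₀ ≤ 0 :=
    mul_nonpos_of_nonpos_of_nonneg
      (mul_nonpos_of_nonneg_of_nonpos (hppos t₀).le h5) h7.le
  linarith

lemma phiE_zero (hq : Continuous q) (hw : Continuous w) (hppos : ∀ t, 0 < p t)
    (hqnn : ∀ t, 0 ≤ q t)
    (H : IsSolFamily p q w u u')
    (hc : Continuous fun x : ℝ × ℝ × ℝ => u x.1 x.2.1 x.2.2) (s : ℝ) :
    phiE u 0 s = ⊤ := by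
  rcases phiE_cases hq hw hppos H hc 0 s with h | ⟨t₀, h1, h2, h3, h4⟩
  · exact h.1
  exfalso
  have h5 := deriv_nonpos_of_first_zero H h1 h3 h4
  have hmono : MonotoneOn (fun t => p t * u' 0 s t) (Icc s t₀) := by
    apply monotoneOn_of_deriv_nonneg (convex_Icc _ _)
    · exact fun t _ => ((H 0 s).2.2 t).2.continuousAt.continuousWithinAt
    · exact fun t _ => ((H 0 s).2.2 t).2.differentiableAt.differentiableWithinAt
    · intro t ht
      rw [interior_Icc] at ht
      rw [((H 0 s).2.2 t).2.deriv]
      have := mul_nonneg (hqnn t) (h4 t ht.1 ht.2).le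
      linarith
  have := hmono (left_mem_Icc.2 h1.le) (right_mem_Icc.2 h1.le) h1.le
  simp only [pu_init H hppos] at this
  have : p t₀ * u' 0 s t₀ ≤ 0 := mul_nonpos_of_nonneg_of_nonpos (hppos t₀).le h5
  linarith

lemma quot_tendsto {f g : ℝ → ℝ} {f' g' x : ℝ} (hf : HasDerivAt f f' x) (hg : HasDerivAt g g' x)
    (hf0 : f x = 0) (hg0 : g x = 0) (hg' : g' ≠ 0) :
    Tendsto (fun t => f t / g t) (nhdsWithin x {x}ᶜ) (nhds (f' / g')) := by
  have := (hasDerivAt_iff_tendsto_slope.1 hf).div (hasDerivAt_iff_tendsto_slope.1 hg) hg'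
  refine this.congr' ?_
  filter_upwards [self_mem_nhdsWithin] with t ht
  have : t - x ≠ 0 := sub_ne_zero.2 ht
  simp only [Pi.div_apply, slope_def_field, hf0, hg0, sub_zero]
  field_simp

/-- Strict monotonicity in the parameter. -/
lemma zero_of_lt (hq : Continuous q) (hw : Continuous w) (hppos : ∀ t, 0 < p t)
    (hqnn : ∀ t, 0 ≤ q t)
    (H : IsSolFamily p q w u u')
    (hc : Continuous fun x : ℝ × ℝ × ℝ => u x.1 x.2.1 x.2.2) {c c' s t₀ : ℝ}
    (hc0 : 0 < c) (hcc : c < c') (hst : s < t₀) (h0 : u c s t₀ = 0)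
    (hpos : ∀ t, s < t → t < t₀ → 0 < u c s t)
    (hv : ∀ t, s < t → t < t₀ → 0 < u c' s t) : False := by
  have hc'0 : 0 < c' := hc0.trans hcc
  obtain ⟨θ, hθ⟩ : ∃ θ, θ = c / c' := ⟨_, rfl⟩
  have hθ0 : 0 < θ := hθ ▸ div_pos hc0 hc'0
  have hθ1 : θ < 1 := by rw [hθ, div_lt_one hc'0]; exact hcc
  have hcθ : c = θ * c' := by rw [hθ]; field_simp
  -- auxiliary functions
  set Y : ℝ → ℝ := fun t => p t * u' c s t * u c' s t - θ * u c s t * (p t * u' c' s t) with hY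
  set W : ℝ → ℝ := fun t => Y t * (u c' s t) ^ (θ - 1) with hW
  set R : ℝ → ℝ := fun t => u c s t * (u c' s t) ^ (-θ) with hR
  have hYd : ∀ t, HasDerivAt Y ((1 - θ) *
      (q t * u c s t * u c' s t + p t * u' c s t * u' c' s t)) t := by
    intro t
    have h1 := (H c s).2.2 t
    have h2 := (H c' s).2.2 t
    have := (h1.2.mul h2.1).sub ((h1.1.const_mul θ).mul h2.2)
    refine this.congr_deriv ?_
    rw [hcθ]; ring
  have hWd : ∀ t, s < t → t < t₀ → HasDerivAt W ((1 - θ) * (u c' s t) ^ (θ - 1) *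
      (q t * u c s t * u c' s t + θ * u c s t * p t * (u' c' s t)^2 / u c' s t)) t := by
    intro t ht1 ht2
    have hvp := hv t ht1 ht2
    have h2 := ((H c' s).2.2 t).1.rpow_const (p := θ - 1) (Or.inl hvp.ne')
    have := (hYd t).mul h2
    refine this.congr_deriv ?_
    rw [Real.rpow_sub_one hvp.ne' (θ - 1)]
    simp only [hY]
    field_simp
    ring
  have hRd : ∀ t, s < t → t < t₀ → HasDerivAt R (W t * (u c' s t) ^ (-θ) /
      (p t * (u c' s t) ^ (θ - 1) * u c' s t)) t := by
    intro t ht1 ht2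
    have hvp := hv t ht1 ht2
    have hpp := hppos t
    have hX : 0 < (u c' s t) ^ (θ - 1) := Real.rpow_pos_of_pos hvp _
    have h2 := ((H c' s).2.2 t).1.rpow_const (p := -θ) (Or.inl hvp.ne')
    have := ((H c s).2.2 t).1.mul h2
    refine this.congr_deriv ?_
    rw [Real.rpow_sub_one hvp.ne' (-θ)]
    simp only [hW, hY]
    field_simp
    ring
  have hWmono : MonotoneOn W (Ioo s t₀) := by
    apply monotoneOn_of_deriv_nonneg (convex_Ioo _ _)
    · exact fun t ht => (hWd t ht.1 ht.2).continuousAt.continuousWithinAt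
    · rw [interior_Ioo]
      exact fun t ht => (hWd t ht.1 ht.2).differentiableAt.differentiableWithinAt
    · intro t ht
      rw [interior_Ioo] at ht
      rw [(hWd t ht.1 ht.2).deriv]
      have hvp := hv t ht.1 ht.2
      have hup := hpos t ht.1 ht.2
      have hpp := hppos t
      have hqq := hqnn t
      have : 0 < 1 - θ := by linarith
      positivity
  -- positivity of W near s
  have hus : ∀ c, u' c s s ≠ 0 := by
    intro c; rw [(H c s).2.1]; exact one_div_ne_zero (hppos s).ne'
  have hlim : Tendsto (fun t => p t * u' c s t - θ * (u c s t / u c' s t) * (p t * u' c' s t))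
      (nhdsWithin s {s}ᶜ) (nhds (1 - θ)) := by
    have h1 := quot_tendsto ((H c s).2.2 s).1 ((H c' s).2.2 s).1 (H c s).1 (H c' s).1 (hus c')
    have h2 := ((H c s).2.2 s).2.continuousAt.tendsto.mono_left
      (nhdsWithin_le_nhds (s := {s}ᶜ))
    have h3 := ((H c' s).2.2 s).2.continuousAt.tendsto.mono_left
      (nhdsWithin_le_nhds (s := {s}ᶜ))
    have := h2.sub ((h1.const_mul θ).mul h3)
    simp only [pu_init H hppos] at this
    rw [(H c s).2.1, (H c' s).2.1, div_self (one_div_ne_zero (hppos s).ne')] at this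
    simpa using this
  have hlim' := hlim.mono_left
    (nhdsWithin_mono s (show Ioi s ⊆ {s}ᶜ from fun x hx => ne_of_gt hx))
  obtain ⟨x, hxlim, hx⟩ := ((hlim'.eventually (lt_mem_nhds (show (0:ℝ) < 1 - θ by linarith))).and
    (Ioo_mem_nhdsGT hst)).exists
  have hWx : 0 < W x := by
    have hvp := hv x hx.1 hx.2
    have : W x = (p x * u' c s x - θ * (u c s x / u c' s x) * (p x * u' c' s x)) *
        (u c' s x * (u c' s x) ^ (θ - 1)) := by
      simp only [hW, hY]; field_simp
    rw [this]
    have := Real.rpow_pos_of_pos hvp (θ - 1)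
    positivity
  have hsub : Ico x t₀ ⊆ Ioo s t₀ := fun t ht => ⟨hx.1.trans_le ht.1, ht.2⟩
  have hRmono : MonotoneOn R (Ico x t₀) := by
    apply monotoneOn_of_deriv_nonneg (convex_Ico _ _)
    · exact fun t ht => (hRd t (hsub ht).1 (hsub ht).2).continuousAt.continuousWithinAt
    · intro t ht
      have ht := hsub (interior_subset ht)
      exact (hRd t ht.1 ht.2).differentiableAt.differentiableWithinAt
    · intro t ht
      have ht0 := interior_subset ht
      have ht := hsub ht0
      rw [(hRd t ht.1 ht.2).deriv]
      have hvp := hv t ht.1 ht.2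
      have hWt : 0 < W t := hWx.trans_le (hWmono hx ht ht0.1)
      have hpp := hppos t
      have h1 := Real.rpow_pos_of_pos hvp (θ - 1)
      have h2 := Real.rpow_pos_of_pos hvp (-θ)
      positivity
  have hRx : 0 < R x :=
    mul_pos (hpos x hx.1 hx.2) (Real.rpow_pos_of_pos (hv x hx.1 hx.2) _)
  -- limit at t₀
  have hRlim : Tendsto R (nhdsWithin t₀ (Iio t₀)) (nhds 0) := by
    have hvc : Tendsto (u c' s) (nhdsWithin t₀ (Iio t₀)) (nhds (u c' s t₀)) :=
      ((sol_cont H c' s).tendsto t₀).mono_left nhdsWithin_le_nhds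
    by_cases hv0 : u c' s t₀ = 0
    · have h1 := quot_tendsto ((H c s).2.2 t₀).1 ((H c' s).2.2 t₀).1 h0 hv0
        (simple_zero hq hw hppos H hc hv0)
      have h1 := h1.mono_left
        (nhdsWithin_mono t₀ (show Iio t₀ ⊆ {t₀}ᶜ from fun x hx => ne_of_lt hx))
      have h2 := hvc.rpow_const (p := 1 - θ) (Or.inr (by linarith))
      have := h1.mul h2
      rw [hv0, Real.zero_rpow (by linarith), mul_zero] at this
      refine this.congr' ?_
      filter_upwards [Ioo_mem_nhdsLT hst] with t ht
      have hvp := hv t ht.1 ht.2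
      simp only [hR]
      rw [show 1 - θ = -θ + 1 by ring, Real.rpow_add_one hvp.ne']
      field_simp
    · have h1 := hvc.rpow_const (p := -θ) (Or.inl hv0)
      have h2 : Tendsto (u c s) (nhdsWithin t₀ (Iio t₀)) (nhds (u c s t₀)) :=
        ((sol_cont H c s).tendsto t₀).mono_left nhdsWithin_le_nhds
      have := h2.mul h1
      rwa [h0, zero_mul] at this
  have : R x ≤ 0 := by
    refine ge_of_tendsto hRlim ?_
    filter_upwards [Ioo_mem_nhdsLT hx.2] with t ht
    exact hRmono ⟨le_rfl, hx.2⟩ ⟨ht.1.le, ht.2⟩ ht.1.le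
  linarith

lemma phiE_lt (hq : Continuous q) (hw : Continuous w) (hppos : ∀ t, 0 < p t)
    (hqnn : ∀ t, 0 ≤ q t)
    (H : IsSolFamily p q w u u')
    (hc : Continuous fun x : ℝ × ℝ × ℝ => u x.1 x.2.1 x.2.2) {c c' s : ℝ}
    (hc0 : 0 < c) (hcc : c < c') (hfin : phiE u c s ≠ ⊤) : phiE u c' s < phiE u c s := by
  rcases phiE_cases hq hw hppos H hc c s with h | ⟨t₀, h1, h2, h3, h4⟩
  · exact absurd h.1 hfin
  rw [h2]
  by_contra hle
  push Not at hle
  refine zero_of_lt hq hw hppos hqnn H hc hc0 hcc h1 h3 h4 ?_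
  intro t ht1 ht2
  refine pos_of_no_zero hq hw hppos H hc ht1 ?_
  intro τ h5 h6 h7
  have := hle.trans (phiE_le h5 h7)
  rw [EReal.coe_le_coe_iff] at this
  linarith

lemma lt_phiE (hq : Continuous q) (hw : Continuous w) (hppos : ∀ t, 0 < p t)
    (H : IsSolFamily p q w u u')
    (hc : Continuous fun x : ℝ × ℝ × ℝ => u x.1 x.2.1 x.2.2) (c s : ℝ) :
    (s : EReal) < phiE u c s := by
  rcases phiE_cases hq hw hppos H hc c s with h | ⟨t₀, h1, h2, h3, h4⟩
  · rw [h.1]; exact EReal.coe_lt_top s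
  · rw [h2]; exact EReal.coe_lt_coe_iff.2 h1

lemma phiE_continuous (hq : Continuous q) (hw : Continuous w) (hppos : ∀ t, 0 < p t)
    (H : IsSolFamily p q w u u')
    (hc : Continuous fun x : ℝ × ℝ × ℝ => u x.1 x.2.1 x.2.2) :
    Continuous fun x : ℝ × ℝ => phiE u x.1 x.2 := by
  rw [continuous_iff_continuousAt]
  rintro ⟨c, s⟩
  refine tendsto_order.2 ⟨?_, ?_⟩
  · intro y hy
    obtain ⟨r, hyr, hr⟩ := EReal.lt_iff_exists_real_btwn.1 hy
    simp only at hr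
    obtain ⟨ε, hε, he⟩ := near_u_pos hq hw hppos H hc c s
    have hposK : ∀ t ∈ Icc (s + ε/2) r, 0 < u c s t := by
      intro t ht
      refine pos_of_no_zero hq hw hppos H hc (by linarith [ht.1]) ?_
      intro τ h5 h6 h7
      have := hr.trans_le (phiE_le h5 h7)
      rw [EReal.coe_lt_coe_iff] at this
      linarith [ht.2]
    have hK : ∀ᶠ x : ℝ × ℝ in nhds (c, s), ∀ t ∈ Icc (s + ε/2) r, 0 < u x.1 x.2 t := by
      apply isCompact_Icc.eventually_forall_of_forall_eventually
      intro t ht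
      have hcont : Continuous fun z : (ℝ × ℝ) × ℝ => u z.1.1 z.1.2 z.2 :=
        hc.comp (by fun_prop : Continuous fun z : (ℝ × ℝ) × ℝ => (z.1.1, z.1.2, z.2))
      exact hcont.continuousAt.eventually (lt_mem_nhds (hposK t ht))
    filter_upwards [hK, Metric.ball_mem_nhds (c, s) hε] with x hxK hx
    simp only [Metric.mem_ball, Prod.dist_eq, Real.dist_eq, max_lt_iff] at hx
    refine hyr.trans_le ?_
    rcases phiE_cases hq hw hppos H hc x.1 x.2 with h | ⟨t₀, h1, h2, h3, h4⟩
    · rw [h.1]; exact le_top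
    rw [h2, EReal.coe_le_coe_iff]
    by_contra hlt
    push Not at hlt
    have : 0 < u x.1 x.2 t₀ := by
      rcases le_total (s + ε/2) t₀ with h | h
      · exact hxK t₀ ⟨h, hlt.le⟩
      · refine he x.1 x.2 t₀ hx.1 hx.2 ?_ h1
        have := abs_lt.1 hx.2
        rw [abs_lt]; constructor <;> linarith
    exact this.ne' h3
  · intro y hy
    rcases phiE_cases hq hw hppos H hc c s with h | ⟨t₀, h1, h2, h3, h4⟩
    · simp only [h.1] at hy; exact absurd hy not_top_lt
    simp only [h2] at hy
    obtain ⟨r, hr, hyr⟩ := EReal.lt_iff_exists_real_btwn.1 hy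
    rw [EReal.coe_lt_coe_iff] at hr
    have hneg : u' c s t₀ < 0 := lt_of_le_of_ne (deriv_nonpos_of_first_zero H h1 h3 h4)
      (simple_zero hq hw hppos H hc h3)
    have hsl := (hasDerivAt_iff_tendsto_slope.1 ((H c s).2.2 t₀).1).mono_left
      (nhdsWithin_mono t₀ (show Ioi t₀ ⊆ {t₀}ᶜ from fun x hx => ne_of_gt hx))
    obtain ⟨t, ht0, ht⟩ := ((hsl.eventually (gt_mem_nhds hneg)).and (Ioo_mem_nhdsGT hr)).exists
    have hut : u c s t < 0 := by
      rw [slope_def_field, h3, sub_zero] at ht0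
      have : 0 < t - t₀ := sub_pos.2 ht.1
      by_contra hn
      exact absurd (div_nonneg (not_lt.1 hn) this.le) (not_le.2 ht0)
    have hcont : Continuous fun z : ℝ × ℝ => u z.1 z.2 t :=
      hc.comp (by fun_prop : Continuous fun z : ℝ × ℝ => (z.1, z.2, t))
    have e1 : ∀ᶠ z : ℝ × ℝ in nhds (c, s), u z.1 z.2 t < 0 :=
      hcont.continuousAt.eventually (gt_mem_nhds hut)
    have e2 : ∀ᶠ z : ℝ × ℝ in nhds (c, s), z.2 < t :=
      continuous_snd.continuousAt.eventually (gt_mem_nhds (h1.trans ht.1))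
    filter_upwards [e1, e2] with z hz1 hz2
    refine lt_of_le_of_lt ?_ hyr
    rcases phiE_cases hq hw hppos H hc z.1 z.2 with h | ⟨t₁, k1, k2, k3, k4⟩
    · exact absurd (h.2 t hz2) (not_lt.2 hz1.le)
    rw [k2, EReal.coe_le_coe_iff]
    by_contra hlt
    push Not at hlt
    exact absurd (k4 t hz2 (ht.2.trans hlt)) (not_lt.2 hz1.le)

lemma phiStep_coe (c s : ℝ) : phiStep u c (s : EReal) = phiE u c s := by
  simp [phiStep]

lemma phiStep_top (c : ℝ) : phiStep u c ⊤ = ⊤ := by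
  simp [phiStep]

lemma le_phiStep (hq : Continuous q) (hw : Continuous w) (hppos : ∀ t, 0 < p t)
    (H : IsSolFamily p q w u u')
    (hc : Continuous fun x : ℝ × ℝ × ℝ => u x.1 x.2.1 x.2.2) (c : ℝ) (x : EReal) :
    x ≤ phiStep u c x := by
  induction x with
  | bot => exact bot_le
  | top => rw [phiStep_top]
  | coe s => rw [phiStep_coe]; exact (lt_phiE hq hw hppos H hc c s).le

lemma phiStep_zero (hq : Continuous q) (hw : Continuous w) (hppos : ∀ t, 0 < p t)
    (hqnn : ∀ t, 0 ≤ q t)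
    (H : IsSolFamily p q w u u')
    (hc : Continuous fun x : ℝ × ℝ × ℝ => u x.1 x.2.1 x.2.2) (x : EReal) :
    phiStep u 0 x = ⊤ := by
  unfold phiStep
  split_ifs
  · rfl
  · exact phiE_zero hq hw hppos hqnn H hc _

lemma phiStep_lt (hq : Continuous q) (hw : Continuous w) (hppos : ∀ t, 0 < p t)
    (hqnn : ∀ t, 0 ≤ q t)
    (H : IsSolFamily p q w u u')
    (hc : Continuous fun x : ℝ × ℝ × ℝ => u x.1 x.2.1 x.2.2) {c c' T : ℝ} {x x' : EReal}
    (hc0 : 0 < c) (hcc : c < c') (hT : (T : EReal) ≤ x') (hx : x' ≤ x)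
    (hfin : phiStep u c x ≠ ⊤) : phiStep u c' x' < phiStep u c x := by
  have hxt : x ≠ ⊤ := by rintro rfl; exact hfin (phiStep_top c)
  have hx't : x' ≠ ⊤ := fun h => hxt (top_le_iff.1 (h ▸ hx))
  have hx'b : x' ≠ ⊥ := fun h => EReal.coe_ne_bot T (le_bot_iff.1 (h ▸ hT))
  have hxb : x ≠ ⊥ := fun h => hx'b (le_bot_iff.1 (h ▸ hx))
  lift x to ℝ using ⟨hxt, hxb⟩
  lift x' to ℝ using ⟨hx't, hx'b⟩
  rw [phiStep_coe] at hfin ⊢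
  rw [phiStep_coe]
  exact (phiE_mono hq hw hppos H hc c' (EReal.coe_le_coe_iff.1 hx)).trans_lt
    (phiE_lt hq hw hppos hqnn H hc hc0 hcc hfin)

lemma phiStep_continuous (hq : Continuous q) (hw : Continuous w) (hppos : ∀ t, 0 < p t)
    (H : IsSolFamily p q w u u')
    (hc : Continuous fun x : ℝ × ℝ × ℝ => u x.1 x.2.1 x.2.2) {T : ℝ} {g : ℝ → EReal}
    {f : ℝ → ℝ} (hf : Continuous f) (hg : Continuous g) (hT : ∀ t, (T : EReal) ≤ g t) :
    Continuous fun t => phiStep u (f t) (g t) := by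
  rw [continuous_iff_continuousAt]
  intro t₀
  have hb : ∀ t, g t ≠ ⊥ := fun t h => EReal.coe_ne_bot T (le_bot_iff.1 (h ▸ hT t))
  by_cases htop : g t₀ = ⊤
  · show Tendsto _ _ (nhds (phiStep u (f t₀) (g t₀)))
    rw [htop, phiStep_top]
    have h1 : Tendsto g (nhds t₀) (nhds ⊤) := htop ▸ hg.tendsto t₀
    exact tendsto_of_tendsto_of_tendsto_of_le_of_le h1 tendsto_const_nhds
      (fun t => le_phiStep hq hw hppos H hc _ _) (fun t => le_top)
  · have h1 : ContinuousAt (fun t => phiE u (f t) (g t).toReal) t₀ := by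
      have h2 : ContinuousAt (fun t => (g t).toReal) t₀ :=
        (EReal.tendsto_toReal htop (hb t₀)).comp (hg.tendsto t₀)
      exact ContinuousAt.comp (f := fun t => (f t, (g t).toReal))
        (phiE_continuous hq hw hppos H hc).continuousAt
        (hf.continuousAt.prodMk h2)
    refine h1.congr ?_
    filter_upwards [hg.continuousAt.eventually_ne htop] with t ht
    unfold phiStep
    rw [if_neg]
    rintro (h | h)
    · exact ht h
    · exact hb t h

end helpers

/-- For `k ≥ 2`, the set
`C_k^{>++} = {(a,b) ∈ ℝ⁺×ℝ⁺ : Φ_k^>(a,b)(T₁) = T₂}` is nonempty if and only if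
`lim_{a,b→+∞} Φ_k^>(a,b)(T₁) < T₂`. -/
theorem CGt_nonempty_iff_limit_lt
    (p q m n : ℝ → ℝ) (uM uM' uN uN' : ℝ → ℝ → ℝ → ℝ) (T₁ T₂ : ℝ) (k : ℕ)
    (hk : 2 ≤ k) (hT : T₁ < T₂)
    (hp : Continuous p) (hq : Continuous q) (hm : Continuous m) (hn : Continuous n)
    (hppos : ∀ t, 0 < p t) (hqnn : ∀ t, 0 ≤ q t)
    (hM : IsSolFamily p q m uM uM') (hN : IsSolFamily p q n uN uN')
    (hcM : Continuous fun x : ℝ × ℝ × ℝ => uM x.1 x.2.1 x.2.2)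
    (hcN : Continuous fun x : ℝ × ℝ × ℝ => uN x.1 x.2.1 x.2.2) :
    ∀ L : EReal,
      Tendsto (fun ab : ℝ × ℝ => PhiGt uM uN ab.1 ab.2 k (T₁ : EReal))
        atTop (nhds L) →
      ((CGt uM uN T₁ T₂ k).Nonempty ↔ L < (T₂ : EReal)) := by
  intro L hL
  have hge : ∀ a b j, (T₁ : EReal) ≤ PhiGt uM uN a b j (T₁ : EReal) := by
    intro a b j
    induction j with
    | zero => exact le_rfl
    | succ j ih =>
      simp only [PhiGt, Function.comp]
      split_ifs
      · exact ih.trans (le_phiStep hq hm hppos hM hcM _ _)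
      · exact ih.trans (le_phiStep hq hn hppos hN hcN _ _)
  have hanti : ∀ a b a' b', 0 < a → 0 < b → a < a' → b < b' → ∀ j,
      PhiGt uM uN a b (j + 1) (T₁ : EReal) ≠ ⊤ →
      PhiGt uM uN a' b' (j + 1) (T₁ : EReal) < PhiGt uM uN a b (j + 1) (T₁ : EReal) := by
    intro a b a' b' ha hb haa hbb j
    have step : ∀ j, PhiGt uM uN a' b' j (T₁ : EReal) ≤ PhiGt uM uN a b j (T₁ : EReal) →
        PhiGt uM uN a b (j + 1) (T₁ : EReal) ≠ ⊤ →
        PhiGt uM uN a' b' (j + 1) (T₁ : EReal) < PhiGt uM uN a b (j + 1) (T₁ : EReal) := by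
      intro j hle hfin
      have hg := hge a' b' j
      simp only [PhiGt, Function.comp] at hfin ⊢
      split_ifs at hfin ⊢
      · exact phiStep_lt hq hm hppos hqnn hM hcM ha haa hg hle hfin
      · exact phiStep_lt hq hn hppos hqnn hN hcN hb hbb hg hle hfin
    induction j with
    | zero => exact step 0 le_rfl
    | succ j ih =>
      refine step (j + 1) ?_
      by_cases h : PhiGt uM uN a b (j + 1) (T₁ : EReal) = ⊤
      · rw [h]; exact le_top
      · exact (ih h).le
  obtain ⟨j, rfl⟩ : ∃ j, k = j + 1 := ⟨k - 1, by omega⟩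
  constructor
  · rintro ⟨⟨a, b⟩, ha, hb, hab⟩
    simp only at ha hb hab
    have h1 := hanti a b (a + 1) (b + 1) ha hb (by linarith) (by linarith) j
      (by rw [hab]; exact EReal.coe_ne_top _)
    refine lt_of_le_of_lt (le_of_tendsto hL ?_) (hab ▸ h1)
    filter_upwards [eventually_ge_atTop ((a + 2, b + 2) : ℝ × ℝ)] with z hz
    exact (hanti (a + 1) (b + 1) z.1 z.2 (by linarith) (by linarith)
      (by linarith [hz.1]) (by linarith [hz.2]) j h1.ne_top).le
  · intro hLT
    obtain ⟨⟨a, b⟩, hlt, hab⟩ := ((hL.eventually (gt_mem_nhds hLT)).and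
      (eventually_ge_atTop ((1, 1) : ℝ × ℝ))).exists
    have ha : (1 : ℝ) ≤ a := hab.1
    have hb : (1 : ℝ) ≤ b := hab.2
    simp only at hlt
    have hcont : ∀ i, Continuous fun t : ℝ => PhiGt uM uN (t * a) (t * b) i (T₁ : EReal) := by
      intro i
      induction i with
      | zero => exact continuous_const
      | succ i ih =>
        simp only [PhiGt, Function.comp]
        split_ifs
        · exact phiStep_continuous hq hm hppos hM hcM (by fun_prop) ih (fun t => hge _ _ i)
        · exact phiStep_continuous hq hn hppos hN hcN (by fun_prop) ih (fun t => hge _ _ i)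
    have h0 : PhiGt uM uN (0 * a) (0 * b) (j + 1) (T₁ : EReal) = ⊤ := by
      simp only [PhiGt, Function.comp, zero_mul]
      split_ifs
      · exact phiStep_zero hq hm hppos hqnn hM hcM _
      · exact phiStep_zero hq hn hppos hqnn hN hcN _
    obtain ⟨t, ht, hteq⟩ := intermediate_value_Icc' (zero_le_one (α := ℝ))
      (hcont (j + 1)).continuousOn
      (show (T₂ : EReal) ∈ Icc _ _ from ⟨by simpa using hlt.le, by rw [h0]; exact le_top⟩)
    have htpos : 0 < t := by
      rcases ht.1.eq_or_lt with h | h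
      · subst h
        simp only [h0] at hteq
        exact absurd hteq.symm (EReal.coe_ne_top _)
      · exact h
    exact ⟨(t * a, t * b), by positivity, by positivity, hteq⟩
end
end

section
/- Let k ≥ 2 and suppose C_k^{>++} = { (a,b) ∈ ℝ⁺×ℝ⁺ : Φ_k^>(a,b)(T₁) = T₂ } is nonempty. Then there exist ν_k ≥ λ₁^m, μ_k ≥ λ₁^n and a strictly decreasing C¹ bijection f_k : (ν_k, +∞) → (μ_k, +∞) with f_k' < 0, such that C_k^{>++} = { (x, f_k(x)) : x ∈ (ν_k, +∞) }. In particular, C_k^{>++} is a hyperbolic-like curve: for each a ∈ (ν_k, ∞) there is exactly one b with (a,b) ∈ C_k^{>++}, and f_k(x) → +∞ as x → ν_k⁺. -/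
open Set Filter Classical

noncomputable section

structure Good (p q w : ℝ → ℝ) (u u' : ℝ → ℝ → ℝ → ℝ) : Prop where
  hp : Continuous p
  hq : Continuous q
  hw : Continuous w
  hpp : ∀ t, 0 < p t
  hqn : ∀ t, 0 ≤ q t
  sol : IsSolFamily p q w u u'
  cu : Continuous fun x : ℝ × ℝ × ℝ => u x.1 x.2.1 x.2.2
  cu' : Continuous fun x : ℝ × ℝ × ℝ => u' x.1 x.2.1 x.2.2

namespace Good

variable {p q w : ℝ → ℝ} {u u' : ℝ → ℝ → ℝ → ℝ}

lemma cont (G : Good p q w u u') (c s : ℝ) : Continuous (u c s) :=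
  G.cu.comp (by fun_prop : Continuous fun t : ℝ => (c, s, t))

lemma cont' (G : Good p q w u u') (c s : ℝ) : Continuous (u' c s) :=
  G.cu'.comp (by fun_prop : Continuous fun t : ℝ => (c, s, t))

lemma d1 (G : Good p q w u u') (c s t : ℝ) : HasDerivAt (u c s) (u' c s t) t :=
  ((G.sol c s).2.2 t).1

lemma d2 (G : Good p q w u u') (c s t : ℝ) :
    HasDerivAt (fun τ => p τ * u' c s τ) (q t * u c s t - c * w t * u c s t) t :=
  ((G.sol c s).2.2 t).2

lemma zero_self (G : Good p q w u u') (c s : ℝ) : u c s s = 0 := (G.sol c s).1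

lemma pu'_self (G : Good p q w u u') (c s : ℝ) : p s * u' c s s = 1 := by
  rw [(G.sol c s).2.1]; have := (G.hpp s).ne'; field_simp

lemma u'_self_pos (G : Good p q w u u') (c s : ℝ) : 0 < u' c s s := by
  rw [(G.sol c s).2.1]; have := (G.hpp s); positivity

lemma pos_near (G : Good p q w u u') (c0 s0 : ℝ) : ∃ δ > 0, ∀ c s t, |c - c0| < δ → |s - s0| < δ →
    |t - s0| < δ → s < t → 0 < u c s t := by
  have h1 : ∀ᶠ x : ℝ × ℝ × ℝ in nhds (c0, s0, s0), 0 < u' x.1 x.2.1 x.2.2 :=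
    (G.cu'.tendsto (c0, s0, s0)).eventually (lt_mem_nhds (G.u'_self_pos c0 s0))
  obtain ⟨δ, hδ, h⟩ := Metric.eventually_nhds_iff.1 h1
  refine ⟨δ, hδ, fun c s t hc hs ht hst => ?_⟩
  have hm : StrictMonoOn (u c s) (Icc s t) := by
    apply strictMonoOn_of_deriv_pos (convex_Icc s t) (G.cont c s).continuousOn
    intro x hx
    rw [interior_Icc] at hx
    rw [(G.d1 c s x).deriv]
    apply @h (c, s, x)
    simp only [Prod.dist_eq, Real.dist_eq, max_lt_iff]
    refine ⟨hc, hs, ?_⟩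
    rw [abs_lt] at *
    constructor <;> linarith [hx.1, hx.2]
  have := hm (left_mem_Icc.2 hst.le) (right_mem_Icc.2 hst.le) hst
  rwa [G.zero_self] at this

lemma pos_right (G : Good p q w u u') (c s : ℝ) : ∃ δ > 0, ∀ t, s < t → t < s + δ → 0 < u c s t := by
  obtain ⟨δ, hδ, h⟩ := G.pos_near c s
  refine ⟨δ, hδ, fun t h1 h2 => h c s t (by simpa) (by simpa) ?_ h1⟩
  rw [abs_lt]; constructor <;> linarith

lemma exists_zero_of_nonpos (G : Good p q w u u') {c s t : ℝ} (hst : s < t) (h : u c s t ≤ 0) :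
    ∃ x, s < x ∧ x ≤ t ∧ u c s x = 0 := by
  obtain ⟨δ, hδ, hp⟩ := G.pos_right c s
  set r := min (s + δ / 2) t with hr
  have hr1 : s < r := lt_min (by linarith) hst
  have hr2 : r ≤ t := min_le_right _ _
  have hr3 : r < s + δ := lt_of_le_of_lt (min_le_left _ _) (by linarith)
  have := intermediate_value_Icc' hr2 (G.cont c s).continuousOn
  obtain ⟨x, hx, hx0⟩ := this ⟨h, (hp r hr1 hr3).le⟩
  exact ⟨x, hr1.trans_le hx.1, hx.2, hx0⟩

lemma phi_zero (_G : Good p q w u u') {c s x : ℝ} (hsx : s < x) (hx : u c s x = 0) :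
    ∃ z : ℝ, phiE u c s = z ∧ z ≤ x := by
  have hne : (zeroSet u c s).Nonempty := ⟨x, hsx, hx⟩
  refine ⟨sInf (zeroSet u c s), by simp [phiE, hne], csInf_le ⟨s, fun y hy => hy.1.le⟩ ⟨hsx, hx⟩⟩

lemma phi_spec0 (G : Good p q w u u') {c s z : ℝ} (h : phiE u c s = z) :
    s < z ∧ u c s z = 0 ∧ ∀ t, s < t → t < z → 0 < u c s t := by
  by_cases hne : (zeroSet u c s).Nonempty
  · simp only [phiE, hne, if_true, EReal.coe_eq_coe_iff] at h
    obtain ⟨δ, hδ, hp⟩ := G.pos_right c s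
    have hbd : BddBelow (zeroSet u c s) := ⟨s, fun y hy => hy.1.le⟩
    have hcl : IsClosed (zeroSet u c s) := by
      have : zeroSet u c s = {t | s + δ ≤ t} ∩ {t | u c s t = 0} := by
        ext t
        simp only [zeroSet, mem_ofPred_eq, mem_inter_iff]
        constructor
        · rintro ⟨h1, h2⟩
          refine ⟨?_, h2⟩
          by_contra h3
          push Not at h3
          exact absurd (hp t h1 h3) (by simp [h2])
        · rintro ⟨h1, h2⟩; exact ⟨by linarith, h2⟩
      rw [this]
      exact (isClosed_le continuous_const continuous_id).inter
        (isClosed_eq (G.cont c s) continuous_const)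
    have hmem := hcl.csInf_mem hne hbd
    rw [h] at hmem
    refine ⟨hmem.1, hmem.2, fun t h1 h2 => ?_⟩
    by_contra h3
    push Not at h3
    obtain ⟨x, hx1, hx2, hx3⟩ := G.exists_zero_of_nonpos h1 h3
    have : sInf (zeroSet u c s) ≤ x := csInf_le hbd ⟨hx1, hx3⟩
    linarith
  · simp [phiE, hne] at h

lemma phi_cases (_G : Good p q w u u') (c s : ℝ) : phiE u c s = ⊤ ∨ ∃ z : ℝ, phiE u c s = z := by
  by_cases hne : (zeroSet u c s).Nonempty
  · right; exact ⟨sInf (zeroSet u c s), by simp only [phiE, hne, if_true]⟩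
  · left; simp [phiE, hne]

lemma u'_ne (G : Good p q w u u') {c s z : ℝ} (hsz : s < z) (hz : u c s z = 0) : u' c s z ≠ 0 := by
  intro hz'
  have hg : Continuous fun t => 1 / p t + q t - c * w t := by
    have := G.hp; have := G.hq; have := G.hw
    have : ∀ t, p t ≠ 0 := fun t => (G.hpp t).ne'
    fun_prop (disch := assumption)
  obtain ⟨C, hC⟩ := (isCompact_Icc (a := s) (b := z)).exists_bound_of_continuousOn hg.continuousOn
  set E : ℝ → ℝ := fun t => (u c s t) ^ 2 + (p t * u' c s t) ^ 2 with hE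
  have hd : ∀ t, HasDerivAt (fun t => E t * Real.exp (C * t))
      ((2 * u c s t * (p t * u' c s t) * (1 / p t + q t - c * w t) + C * E t) * Real.exp (C * t)) t := by
    intro t
    have h1 := ((G.d1 c s t).pow 2).add ((G.d2 c s t).pow 2)
    have h2 := ((hasDerivAt_id t).const_mul C).exp
    have h3 := h1.mul h2
    have := (G.hpp t).ne'
    refine h3.congr_deriv ?_
    simp only [hE, Pi.add_apply, Pi.pow_apply, id]
    field_simp
    ring
  have hm : MonotoneOn (fun t => E t * Real.exp (C * t)) (Icc s z) := by
    apply monotoneOn_of_deriv_nonneg (convex_Icc s z)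
    · exact fun t _ => (hd t).continuousAt.continuousWithinAt
    · exact fun t _ => (hd t).differentiableAt.differentiableWithinAt
    · intro t ht
      rw [interior_Icc] at ht
      rw [(hd t).deriv]
      apply mul_nonneg _ (Real.exp_pos _).le
      have hb := hC t ⟨ht.1.le, ht.2.le⟩
      rw [Real.norm_eq_abs, abs_le] at hb
      simp only [hE]
      set g := 1 / p t + q t - c * w t
      set x := u c s t
      set y := p t * u' c s t
      nlinarith [mul_nonneg (sub_nonneg.2 hb.2) (sq_nonneg (x - y)), mul_nonneg (by linarith [hb.1] : 0 ≤ C + g) (sq_nonneg (x + y))]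
  have := hm (left_mem_Icc.2 hsz.le) (right_mem_Icc.2 hsz.le) hsz.le
  simp only [hE, hz, hz', G.pu'_self, G.zero_self] at this
  have := Real.exp_pos (C * s)
  norm_num at *
  linarith

lemma phi_spec (G : Good p q w u u') {c s z : ℝ} (h : phiE u c s = z) :
    s < z ∧ u c s z = 0 ∧ (∀ t, s < t → t < z → 0 < u c s t) ∧ u' c s z < 0 := by
  obtain ⟨h1, h2, h3⟩ := G.phi_spec0 h
  refine ⟨h1, h2, h3, lt_of_le_of_ne ?_ (G.u'_ne h1 h2)⟩
  by_contra h4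
  push Not at h4
  have h5 := (G.d1 c s z)
  have h6 : ∀ᶠ t in nhdsWithin z (Iio z), u c s t < u c s z := by
    have := (hasDerivAt_iff_tendsto_slope.1 h5).eventually (lt_mem_nhds h4)
    have h7 : ∀ᶠ t in nhdsWithin z (Iio z), 0 < slope (u c s) z t :=
      this.filter_mono (nhdsWithin_mono _ (fun x (hx : x < z) => hx.ne))
    filter_upwards [h7, self_mem_nhdsWithin] with t ht hlt
    rw [slope_def_field] at ht
    have hlt' : t - z < 0 := sub_neg.2 hlt
    by_contra hh
    push Not at hh
    exact absurd ht (not_lt.2 (div_nonpos_of_nonneg_of_nonpos (by linarith) hlt'.le))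
  have h8 : ∀ᶠ t in nhdsWithin z (Iio z), s < t :=
    eventually_nhdsWithin_of_eventually_nhds (lt_mem_nhds h1)
  obtain ⟨t, ⟨ht1, ht2⟩, ht3⟩ := ((h6.and h8).and self_mem_nhdsWithin).exists
  rw [h2] at ht1
  exact absurd (h3 t ht2 ht3) (by linarith)

lemma lt_phi_iff (G : Good p q w u u') {c s R : ℝ} :
    (R : EReal) < phiE u c s ↔ ∀ t, s < t → t ≤ R → 0 < u c s t := by
  constructor
  · intro h t h1 h2
    by_contra h3
    push Not at h3
    obtain ⟨x, hx1, hx2, hx3⟩ := G.exists_zero_of_nonpos h1 h3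
    obtain ⟨z, hz, hzx⟩ := G.phi_zero hx1 hx3
    rw [hz, EReal.coe_lt_coe_iff] at h
    linarith
  · intro h
    rcases G.phi_cases c s with h1 | ⟨z, hz⟩
    · rw [h1]; exact EReal.coe_lt_top R
    · rw [hz, EReal.coe_lt_coe_iff]
      obtain ⟨h2, h3, -⟩ := G.phi_spec0 hz
      by_contra h4
      push Not at h4
      exact absurd (h z h2 h4) (by simp [h3])

lemma self_lt_phi (G : Good p q w u u') (c s : ℝ) : (s : EReal) < phiE u c s :=
  G.lt_phi_iff.2 fun t h1 h2 => by linarith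

lemma phi_lt_iff (G : Good p q w u u') {c s R : ℝ} :
    phiE u c s < R ↔ ∃ t, s < t ∧ t < R ∧ u c s t < 0 := by
  constructor
  · intro h
    rcases G.phi_cases c s with h1 | ⟨z, hz⟩
    · rw [h1] at h; exact absurd h (by simp)
    · rw [hz, EReal.coe_lt_coe_iff] at h
      obtain ⟨h1, h2, h3, h4⟩ := G.phi_spec hz
      have h5 := (hasDerivAt_iff_tendsto_slope.1 (G.d1 c s z)).eventually (gt_mem_nhds h4)
      have h7 : ∀ᶠ t in nhdsWithin z (Ioi z), slope (u c s) z t < 0 :=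
        h5.filter_mono (nhdsWithin_mono _ (fun x (hx : z < x) => hx.ne'))
      have h8 : ∀ᶠ t in nhdsWithin z (Ioi z), t < R :=
        eventually_nhdsWithin_of_eventually_nhds (gt_mem_nhds h)
      obtain ⟨t, ⟨ht1, ht2⟩, ht3⟩ := ((h7.and h8).and self_mem_nhdsWithin).exists
      refine ⟨t, h1.trans ht3, ht2, ?_⟩
      rw [slope_def_field, h2, sub_zero] at ht1
      by_contra hh
      push Not at hh
      have : 0 < t - z := sub_pos.2 ht3
      exact absurd ht1 (not_lt.2 (div_nonneg hh this.le))
  · rintro ⟨t, h1, h2, h3⟩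
    obtain ⟨x, hx1, hx2, hx3⟩ := G.exists_zero_of_nonpos h1 h3.le
    obtain ⟨z, hz, hzx⟩ := G.phi_zero hx1 hx3
    rw [hz, EReal.coe_lt_coe_iff]
    linarith

lemma ev_lt_phi (G : Good p q w u u') {c s R : ℝ} (h : (R : EReal) < phiE u c s) :
    ∀ᶠ y : ℝ × ℝ in nhds (c, s), (R : EReal) < phiE u y.1 y.2 := by
  rw [G.lt_phi_iff] at h
  obtain ⟨δ, hδ, hp⟩ := G.pos_near c s
  have h1 : ∀ᶠ y : ℝ × ℝ in nhds (c, s), |y.1 - c| < δ ∧ |y.2 - s| < δ := by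
    rw [Metric.eventually_nhds_iff]
    refine ⟨δ, hδ, fun y hy => ?_⟩
    simpa [Prod.dist_eq, Real.dist_eq] using hy
  have h2 : ∀ᶠ y : ℝ × ℝ in nhds (c, s), ∀ t ∈ Icc (s + δ / 2) R, 0 < u y.1 y.2 t := by
    apply (isCompact_Icc).eventually_forall_of_forall_eventually
    intro t ht
    have hc : Continuous fun x : (ℝ × ℝ) × ℝ => u x.1.1 x.1.2 x.2 :=
      G.cu.comp (by fun_prop : Continuous fun x : (ℝ × ℝ) × ℝ => (x.1.1, x.1.2, x.2))
    exact (hc.tendsto ((c, s), t)).eventually (lt_mem_nhds (h t (by linarith [ht.1]) ht.2))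
  filter_upwards [h1, h2] with y hy1 hy2
  rw [G.lt_phi_iff]
  intro t ht1 ht2
  by_cases h3 : s + δ / 2 ≤ t
  · exact hy2 t ⟨h3, ht2⟩
  · push Not at h3
    refine hp _ _ _ hy1.1 hy1.2 ?_ ht1
    have := abs_lt.1 hy1.2
    rw [abs_lt]; constructor <;> linarith

lemma ev_phi_lt (G : Good p q w u u') {c s R : ℝ} (h : phiE u c s < R) :
    ∀ᶠ y : ℝ × ℝ in nhds (c, s), phiE u y.1 y.2 < R := by
  obtain ⟨t, h1, h2, h3⟩ := G.phi_lt_iff.1 h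
  have hc : Continuous fun x : ℝ × ℝ => u x.1 x.2 t :=
    G.cu.comp (by fun_prop : Continuous fun x : ℝ × ℝ => (x.1, x.2, t))
  filter_upwards [(hc.tendsto (c, s)).eventually (gt_mem_nhds h3),
    (continuous_snd.tendsto (c, s)).eventually (gt_mem_nhds h1)] with y hy1 hy2
  exact G.phi_lt_iff.2 ⟨t, hy2, h2, hy1⟩

lemma phi_cont (G : Good p q w u u') : Continuous fun y : ℝ × ℝ => phiE u y.1 y.2 := by
  rw [continuous_iff_continuousAt]
  rintro ⟨c, s⟩
  refine tendsto_order.2 ⟨fun a ha => ?_, fun a ha => ?_⟩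
  · obtain ⟨R, hR1, hR2⟩ := EReal.lt_iff_exists_real_btwn.1 ha
    filter_upwards [G.ev_lt_phi hR2] with y hy using hR1.trans hy
  · obtain ⟨R, hR1, hR2⟩ := EReal.lt_iff_exists_real_btwn.1 ha
    filter_upwards [G.ev_phi_lt hR1] with y hy using hy.trans hR2

lemma phi_c0 (G : Good p q w u u') (s : ℝ) : phiE u 0 s = ⊤ := by
  rcases G.phi_cases 0 s with h | ⟨z, hz⟩
  · exact h
  exfalso
  obtain ⟨h1, h2, h3, h4⟩ := G.phi_spec hz
  have hm : MonotoneOn (fun τ => p τ * u' 0 s τ) (Icc s z) := by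
    apply monotoneOn_of_deriv_nonneg (convex_Icc s z)
    · exact fun t _ => (G.d2 0 s t).continuousAt.continuousWithinAt
    · exact fun t _ => (G.d2 0 s t).differentiableAt.differentiableWithinAt
    · intro t ht
      rw [interior_Icc] at ht
      rw [(G.d2 0 s t).deriv]
      have := mul_nonneg (G.hqn t) (h3 t ht.1 ht.2).le
      linarith
  have := hm (left_mem_Icc.2 h1.le) (right_mem_Icc.2 h1.le) h1.le
  simp only [G.pu'_self] at this
  nlinarith [G.hpp z]

lemma wronskian (G : Good p q w u u') (c s c' s' x y : ℝ) :
    (p y * u' c s y * u c' s' y - u c s y * (p y * u' c' s' y)) -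
    (p x * u' c s x * u c' s' x - u c s x * (p x * u' c' s' x)) =
      (c' - c) * ∫ t in x..y, w t * u c s t * u c' s' t := by
  have hc := G.cont c s
  have hc' := G.cont c' s'
  have hw := G.hw
  rw [← intervalIntegral.integral_const_mul]
  symm
  apply intervalIntegral.integral_eq_sub_of_hasDerivAt
    (f := fun t => p t * u' c s t * u c' s' t - u c s t * (p t * u' c' s' t))
  · intro t _
    refine (((G.d2 c s t).mul (G.d1 c' s' t)).sub ((G.d1 c s t).mul (G.d2 c' s' t))).congr_deriv ?_
    ring
  · exact Continuous.intervalIntegrable (by fun_prop) _ _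

lemma I_pos (G : Good p q w u u') {c s z : ℝ} (hc : 0 < c) (h : phiE u c s = z) :
    0 < ∫ t in s..z, w t * u c s t * u c s t := by
  obtain ⟨h1, h2, h3, h4⟩ := G.phi_spec h
  have k1 := G.cont c s
  have k2 := G.cont' c s
  have k3 := G.hw
  have k4 := G.hp
  have k5 := G.hq
  have e : (∫ t in s..z, (p t * u' c s t ^ 2 + q t * u c s t ^ 2) - c * (w t * u c s t * u c s t)) =
      p z * u' c s z * u c s z - p s * u' c s s * u c s s := by
    apply intervalIntegral.integral_eq_sub_of_hasDerivAt
      (f := fun t => p t * u' c s t * u c s t)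
    · intro t _
      refine ((G.d2 c s t).mul (G.d1 c s t)).congr_deriv ?_
      ring
    · exact Continuous.intervalIntegrable (by fun_prop) _ _
  rw [intervalIntegral.integral_sub (Continuous.intervalIntegrable (by fun_prop) _ _)
    (Continuous.intervalIntegrable (by fun_prop) _ _), intervalIntegral.integral_const_mul, h2,
    G.zero_self] at e
  have hpos : 0 < ∫ t in s..z, (p t * u' c s t ^ 2 + q t * u c s t ^ 2) := by
    apply intervalIntegral.integral_pos h1 (by fun_prop)
    · intro t _
      have := (G.hpp t).le; have := G.hqn t
      positivity
    · refine ⟨s, left_mem_Icc.2 h1.le, ?_⟩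
      have := G.hpp s; have := G.u'_self_pos c s; have := G.hqn s
      positivity
  simp only [mul_zero, sub_zero] at e
  by_contra hh
  push Not at hh
  nlinarith

/-- Averaged derivative. -/
def D (u' : ℝ → ℝ → ℝ → ℝ) (c s x y : ℝ) : ℝ := ∫ θ in (0 : ℝ)..1, u' c s (x + θ * (y - x))

lemma D_self (c s x : ℝ) : D u' c s x x = u' c s x := by simp [D]

lemma D_mul (G : Good p q w u u') (c s x y : ℝ) : (y - x) * D u' c s x y = u c s y - u c s x := by
  have k2 := G.cont' c s
  rw [D, ← intervalIntegral.integral_const_mul]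
  rw [intervalIntegral.integral_eq_sub_of_hasDerivAt (f := fun θ => u c s (x + θ * (y - x)))]
  · simp
  · intro θ _
    have h1 : HasDerivAt (fun θ : ℝ => x + θ * (y - x)) (y - x) θ := by
      simpa using ((hasDerivAt_id θ).mul_const (y - x)).const_add x
    have := (G.d1 c s (x + θ * (y - x))).comp θ h1
    refine this.congr_deriv (by ring)
  · exact Continuous.intervalIntegrable (by fun_prop) _ _

lemma D_cont (G : Good p q w u u') :
    Continuous fun x : ℝ × ℝ × ℝ × ℝ => D u' x.1 x.2.1 x.2.2.1 x.2.2.2 := by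
  unfold D
  apply intervalIntegral.continuous_parametric_intervalIntegral_of_continuous'
    (f := fun (x : ℝ × ℝ × ℝ × ℝ) θ => u' x.1 x.2.1 (x.2.2.1 + θ * (x.2.2.2 - x.2.2.1)))
  exact G.cu'.comp (by fun_prop : Continuous fun y : (ℝ × ℝ × ℝ × ℝ) × ℝ =>
    (y.1.1, y.1.2.1, (y.1.2.2.1 + y.2 * (y.1.2.2.2 - y.1.2.2.1))))

lemma expand (G : Good p q w u u') {c s z : ℝ} (hc : 0 < c) (h : phiE u c s = z) :
    ∃ (α β : ℝ × ℝ → ℝ) (α0 β0 : ℝ), 0 < α0 ∧ 0 < β0 ∧ Tendsto α (nhds (c, s)) (nhds α0) ∧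
      Tendsto β (nhds (c, s)) (nhds β0) ∧
      ∀ᶠ y : ℝ × ℝ in nhds (c, s), ∀ z' : ℝ, phiE u y.1 y.2 = z' →
        z' - z = α y * (y.2 - s) - β y * (y.1 - c) := by
  obtain ⟨h1, h2, h3, h4⟩ := G.phi_spec h
  set K := p z * u' c s z with hK
  have hKneg : K < 0 := mul_neg_of_pos_of_neg (G.hpp z) h4
  set Z : ℝ × ℝ → ℝ := fun y => (phiE u y.1 y.2).toReal with hZ
  have hZt : Tendsto Z (nhds (c, s)) (nhds z) := by
    have := (EReal.tendsto_toReal (a := phiE u c s) (by rw [h]; simp) (by rw [h]; simp)).comp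
      (G.phi_cont.tendsto (c, s))
    rw [h] at this
    exact this
  set Ds : ℝ × ℝ → ℝ := fun y => D u' y.1 y.2 y.2 s with hDs
  set Dz : ℝ × ℝ → ℝ := fun y => D u' y.1 y.2 (Z y) z with hDz
  set I : ℝ × ℝ → ℝ := fun y => ∫ t in s..z, w t * u c s t * u y.1 y.2 t with hI
  have hDst : Tendsto Ds (nhds (c, s)) (nhds (u' c s s)) := by
    have h5 : Continuous Ds :=
      G.D_cont.comp (by fun_prop : Continuous fun y : ℝ × ℝ => (y.1, y.2, y.2, s))
    have := h5.tendsto (c, s)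
    simpa [hDs, D_self] using this
  have hDzt : Tendsto Dz (nhds (c, s)) (nhds (u' c s z)) := by
    have h5 : Tendsto (fun y : ℝ × ℝ => (y.1, y.2, Z y, z)) (nhds (c, s)) (nhds (c, s, z, z)) :=
      (continuous_fst.tendsto (c, s)).prodMk_nhds ((continuous_snd.tendsto (c, s)).prodMk_nhds
        (hZt.prodMk_nhds tendsto_const_nhds))
    have := (G.D_cont.tendsto (c, s, z, z)).comp h5
    simp only [D_self] at this
    exact this
  have hIt : Tendsto I (nhds (c, s)) (nhds (I (c, s))) := by
    apply Continuous.tendsto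
    apply intervalIntegral.continuous_parametric_intervalIntegral_of_continuous'
      (f := fun (y : ℝ × ℝ) t => w t * u c s t * u y.1 y.2 t)
    have k1 := G.cont c s
    have k3 := G.hw
    have k : Continuous fun x : (ℝ × ℝ) × ℝ => u x.1.1 x.1.2 x.2 :=
      G.cu.comp (by fun_prop : Continuous fun x : (ℝ × ℝ) × ℝ => (x.1.1, x.1.2, x.2))
    exact ((k3.comp continuous_snd).mul (k1.comp continuous_snd)).mul k
  have hKD : Tendsto (fun y => K * Dz y) (nhds (c, s)) (nhds (K * u' c s z)) := hDzt.const_mul K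
  have hpos : 0 < K * u' c s z := mul_pos_of_neg_of_neg hKneg h4
  have hI0 : 0 < I (c, s) := G.I_pos hc h
  refine ⟨fun y => Ds y / (K * Dz y), fun y => I y / (K * Dz y), _, _,
    div_pos (G.u'_self_pos c s) hpos, div_pos hI0 hpos, hDst.div hKD hpos.ne',
    hIt.div hKD hpos.ne', ?_⟩
  filter_upwards [hKD.eventually (lt_mem_nhds hpos)] with y hy z' hz'
  have e1 := G.wronskian c s y.1 y.2 s z
  have e2 := G.D_mul y.1 y.2 y.2 s
  have e3 := G.D_mul y.1 y.2 (Z y) z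
  have hZy : Z y = z' := by simp [hZ, hz']
  obtain ⟨-, g2, -⟩ := G.phi_spec hz'
  rw [G.pu'_self, G.zero_self, h2] at e1
  rw [G.zero_self] at e2
  rw [hZy, g2] at e3
  have e4 : Dz y = D u' y.1 y.2 z' z := by simp only [hDz, hZy]
  rw [← e4] at e3
  change (s - y.2) * Ds y = _ at e2
  change _ = (y.1 - c) * I y at e1
  rw [div_mul_eq_mul_div, div_mul_eq_mul_div, ← sub_div, eq_div_iff hy.ne']
  linear_combination (-1) * e1 + e2 - K * e3

lemma local_lt (G : Good p q w u u') {c s z : ℝ} (hc : 0 < c) (h : phiE u c s = z) :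
    ∀ᶠ c' in nhdsWithin c (Ioi c), phiE u c' s < z := by
  obtain ⟨α, β, α0, β0, hα, hβ, hαt, hβt, he⟩ := G.expand hc h
  have ht : Tendsto (fun c' : ℝ => (c', s)) (nhdsWithin c (Ioi c)) (nhds (c, s)) :=
    ((by fun_prop : Continuous fun c' : ℝ => (c', s)).tendsto c).mono_left nhdsWithin_le_nhds
  have hf : ∀ᶠ y : ℝ × ℝ in nhds (c, s), phiE u y.1 y.2 < ⊤ :=
    (G.phi_cont.tendsto (c, s)).eventually (gt_mem_nhds (by rw [h]; exact EReal.coe_lt_top z))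
  filter_upwards [ht.eventually he, ht.eventually (hβt.eventually (lt_mem_nhds hβ)),
    ht.eventually hf, self_mem_nhdsWithin] with c' h1 h2 h3 h4
  rcases G.phi_cases c' s with h5 | ⟨z', hz'⟩
  · simp [h5] at h3
  · have := h1 z' hz'
    rw [hz', EReal.coe_lt_coe_iff]
    have h6 : 0 < c' - c := sub_pos.2 h4
    have := mul_pos h2 h6
    simp at *
    linarith

lemma anti_c_weak (G : Good p q w u u') {c c' s : ℝ} (hc : 0 < c) (hcc : c ≤ c') :
    phiE u c' s ≤ phiE u c s := by
  rcases G.phi_cases c s with h | ⟨z, hz⟩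
  · rw [h]; exact le_top
  have hcl : IsClosed {x | phiE u x s ≤ phiE u c s} :=
    isClosed_le (G.phi_cont.comp (by fun_prop : Continuous fun c' : ℝ => (c', s))) continuous_const
  have := IsClosed.Icc_subset_of_forall_mem_nhdsWithin (a := c) (b := c')
    (hcl.inter isClosed_Icc) (le_refl (phiE u c s)) (by
      rintro x ⟨hx1, hx2⟩
      rcases G.phi_cases x s with h | ⟨z', hz'⟩
      · simp only [mem_ofPred_eq, h, hz] at hx1
        simp at hx1
      · filter_upwards [G.local_lt (hc.trans_le hx2.1) hz'] with y hy
        rw [← hz'] at hy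
        exact hy.le.trans hx1)
  exact this (right_mem_Icc.2 hcc)

lemma anti_c (G : Good p q w u u') {c c' s z : ℝ} (hc : 0 < c) (hcc : c < c') (h : phiE u c s = z) :
    phiE u c' s < phiE u c s := by
  have h1 := G.local_lt hc h
  have h2 : ∀ᶠ x in nhdsWithin c (Ioi c), x < c' :=
    eventually_nhdsWithin_of_eventually_nhds (gt_mem_nhds hcc)
  obtain ⟨x, ⟨hx1, hx2⟩, hx3⟩ := ((h1.and h2).and self_mem_nhdsWithin).exists
  have hx0 : 0 < x := hc.trans hx3
  rw [h]
  exact (G.anti_c_weak hx0 hx2.le).trans_lt hx1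

lemma mono_s (G : Good p q w u u') {c s s' z' : ℝ} (hs : s < s') (h : phiE u c s' = z') :
    phiE u c s < phiE u c s' := by
  obtain ⟨h1, h2, h3, h4⟩ := G.phi_spec h
  by_contra hh
  push Not at hh
  rw [h] at hh
  have hpos : ∀ t, s < t → t < z' → 0 < u c s t := fun t k1 k2 => by
    have : (t : EReal) < phiE u c s := (EReal.coe_lt_coe_iff.2 k2).trans_le hh
    exact G.lt_phi_iff.1 this t k1 le_rfl
  have hz : 0 ≤ u c s z' := by
    have : IsClosed {t | 0 ≤ u c s t} := isClosed_le continuous_const (G.cont c s)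
    have hz' : z' ∈ closure (Ioo s z') := by
      rw [closure_Ioo (hs.trans h1).ne]; exact right_mem_Icc.2 (hs.trans h1).le
    exact closure_minimal (fun t ht => (hpos t ht.1 ht.2).le) this hz'
  have e := G.wronskian c s' c s s' z'
  rw [G.pu'_self, G.zero_self, h2] at e
  have k1 := hpos s' hs h1
  have k2 : p z' * u' c s' z' * u c s z' ≤ 0 :=
    mul_nonpos_of_nonpos_of_nonneg (mul_neg_of_pos_of_neg (G.hpp z') h4).le hz
  simp at e
  linarith

end Good

lemma step_top (u : ℝ → ℝ → ℝ → ℝ) (c : ℝ) : phiStep u c ⊤ = ⊤ := by simp [phiStep]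

lemma step_coe (u : ℝ → ℝ → ℝ → ℝ) (c x : ℝ) : phiStep u c (x : EReal) = phiE u c x := by
  simp [phiStep]

section chain

variable {p q w : ℝ → ℝ} {u u' : ℝ → ℝ → ℝ → ℝ}

lemma lt_step (G : Good p q w u u') (c : ℝ) {x : EReal} (h1 : x ≠ ⊥) (h2 : x ≠ ⊤) :
    x < phiStep u c x := by
  lift x to ℝ using ⟨h2, h1⟩
  rw [step_coe]; exact G.self_lt_phi c x

lemma le_step (G : Good p q w u u') (c : ℝ) (x : EReal) : x ≤ phiStep u c x := by
  by_cases h1 : x = ⊥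
  · simp [h1]
  by_cases h2 : x = ⊤
  · simp [h2, step_top]
  exact (lt_step G c h1 h2).le

lemma step_weak (G : Good p q w u u') {c c' : ℝ} {x x' : EReal} (hc : 0 < c) (hcc : c ≤ c')
    (hx' : x' ≠ ⊥) (hx : x' ≤ x) : phiStep u c' x' ≤ phiStep u c x := by
  by_cases h2 : x = ⊤
  · simp [h2, step_top]
  have h3 : x ≠ ⊥ := fun h => hx' (by simpa [h] using hx)
  lift x to ℝ using ⟨h2, h3⟩
  have h4 : x' ≠ ⊤ := fun h => by simp [h] at hx
  lift x' to ℝ using ⟨h4, hx'⟩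
  rw [step_coe, step_coe]
  refine (G.anti_c_weak hc hcc).trans ?_
  rcases (EReal.coe_le_coe_iff.1 hx).eq_or_lt with h | h
  · rw [h]
  · rcases G.phi_cases c x with h5 | ⟨z, hz⟩
    · rw [h5]; exact le_top
    · exact (G.mono_s h hz).le

lemma step_strict (G : Good p q w u u') {c c' : ℝ} {x x' : EReal} (hc : 0 < c) (hcc : c ≤ c')
    (hx' : x' ≠ ⊥) (hx : x' ≤ x) (hs : c < c' ∨ x' < x) (hfin : phiStep u c x ≠ ⊤) :
    phiStep u c' x' < phiStep u c x := by
  have h2 : x ≠ ⊤ := fun h => hfin (by rw [h, step_top])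
  have h3 : x ≠ ⊥ := fun h => hx' (by simpa [h] using hx)
  rcases hs with hs | hs
  · refine (step_weak G (hc.trans hs) le_rfl hx' hx).trans_lt ?_
    lift x to ℝ using ⟨h2, h3⟩
    rw [step_coe] at *
    rcases G.phi_cases c x with h5 | ⟨z, hz⟩
    · exact absurd h5 hfin
    · rw [step_coe]; exact G.anti_c hc hs hz
  · refine (step_weak G hc hcc hx' le_rfl).trans_lt ?_
    lift x to ℝ using ⟨h2, h3⟩
    have h4 : x' ≠ ⊤ := fun h => by simp [h] at hs
    lift x' to ℝ using ⟨h4, hx'⟩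
    rw [step_coe] at *
    rcases G.phi_cases c x with h5 | ⟨z, hz⟩
    · exact absurd h5 hfin
    · rw [step_coe]; exact G.mono_s (EReal.coe_lt_coe_iff.1 hs) hz

lemma step_tendsto (G : Good p q w u u') {ι : Type*} {l : Filter ι} {c : ι → ℝ} {x : ι → EReal}
    {c0 : ℝ} {x0 : EReal} (h0 : x0 ≠ ⊥) (hc : Tendsto c l (nhds c0)) (hx : Tendsto x l (nhds x0)) :
    Tendsto (fun i => phiStep u (c i) (x i)) l (nhds (phiStep u c0 x0)) := by
  by_cases h2 : x0 = ⊤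
  · rw [h2, step_top]
    rw [h2] at hx
    exact tendsto_nhds_top_mono' hx fun i => le_step G (c i) (x i)
  · have hr : Tendsto (fun i => (x i).toReal) l (nhds x0.toReal) :=
      (EReal.tendsto_toReal h2 h0).comp hx
    have := (G.phi_cont.tendsto (c0, x0.toReal)).comp (hc.prodMk_nhds hr)
    have e : phiStep u c0 x0 = phiE u c0 x0.toReal := by simp [phiStep, h2, h0]
    rw [e]
    refine this.congr' ?_
    filter_upwards [hx.eventually_ne h2, hx.eventually_ne h0] with i h3 h4
    simp [phiStep, h3, h4]

end chain

section two

variable {p q m n : ℝ → ℝ} {uM uM' uN uN' : ℝ → ℝ → ℝ → ℝ}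

lemma Phi_even (a b : ℝ) {j : ℕ} (h : j % 2 = 0) (x : EReal) :
    PhiGt uM uN a b (j + 1) x = phiStep uM a (PhiGt uM uN a b j x) := by
  simp [PhiGt, h]

lemma Phi_odd (a b : ℝ) {j : ℕ} (h : ¬ j % 2 = 0) (x : EReal) :
    PhiGt uM uN a b (j + 1) x = phiStep uN b (PhiGt uM uN a b j x) := by
  simp only [PhiGt, h, if_false, Function.comp]

lemma Phi_le_succ (GM : Good p q m uM uM') (GN : Good p q n uN uN') (a b : ℝ) (j : ℕ) (x : EReal) :
    PhiGt uM uN a b j x ≤ PhiGt uM uN a b (j + 1) x := by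
  by_cases h : j % 2 = 0
  · rw [Phi_even a b h]; exact le_step GM _ _
  · rw [Phi_odd a b h]; exact le_step GN _ _

lemma Phi_mono_j (GM : Good p q m uM uM') (GN : Good p q n uN uN') (a b : ℝ) (x : EReal) :
    Monotone fun j => PhiGt uM uN a b j x :=
  monotone_nat_of_le_succ fun j => Phi_le_succ GM GN a b j x

lemma Phi_ne_bot (GM : Good p q m uM uM') (GN : Good p q n uN uN') (a b : ℝ) (j : ℕ) (x : ℝ) :
    PhiGt uM uN a b j x ≠ ⊥ := by
  have h : (x : EReal) ≤ PhiGt uM uN a b j x := Phi_mono_j GM GN a b x (Nat.zero_le j)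
  intro h'
  rw [h'] at h
  simp at h

lemma Phi_tendsto (GM : Good p q m uM uM') (GN : Good p q n uN uN') {ι : Type*} {l : Filter ι}
    {a b : ι → ℝ} {a0 b0 : ℝ} (ha : Tendsto a l (nhds a0)) (hb : Tendsto b l (nhds b0)) (x : ℝ)
    (j : ℕ) : Tendsto (fun i => PhiGt uM uN (a i) (b i) j x) l (nhds (PhiGt uM uN a0 b0 j x)) := by
  induction j with
  | zero => exact tendsto_const_nhds
  | succ j ih =>
    by_cases h : j % 2 = 0
    · simp only [Phi_even _ _ h]
      exact step_tendsto GM (Phi_ne_bot GM GN _ _ _ _) ha ih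
    · simp only [Phi_odd _ _ h]
      exact step_tendsto GN (Phi_ne_bot GM GN _ _ _ _) hb ih

lemma Phi_anti (GM : Good p q m uM uM') (GN : Good p q n uN uN') {a a' b b' : ℝ} (ha : 0 < a)
    (hb : 0 < b) (haa : a ≤ a') (hbb : b ≤ b') (x : ℝ) (j : ℕ) :
    PhiGt uM uN a' b' j x ≤ PhiGt uM uN a b j x ∧
    (PhiGt uM uN a b j x ≠ ⊤ → (1 ≤ j ∧ a < a' ∨ 2 ≤ j ∧ b < b') →
      PhiGt uM uN a' b' j x < PhiGt uM uN a b j x) := by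
  induction j with
  | zero => exact ⟨le_rfl, fun _ h => by omega⟩
  | succ j ih =>
    have hnb := Phi_ne_bot GM GN a' b' j x
    by_cases h : j % 2 = 0
    · simp only [Phi_even _ _ h]
      refine ⟨step_weak GM ha haa hnb ih.1, fun hfin hs => ?_⟩
      refine step_strict GM ha haa hnb ih.1 ?_ hfin
      rcases hs with hs | hs
      · exact Or.inl hs.2
      · exact Or.inr (ih.2 (fun h' => hfin (by rw [h', step_top])) (Or.inr ⟨by omega, hs.2⟩))
    · simp only [Phi_odd _ _ h]
      refine ⟨step_weak GN hb hbb hnb ih.1, fun hfin hs => ?_⟩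
      refine step_strict GN hb hbb hnb ih.1 ?_ hfin
      rcases hs with hs | hs
      · exact Or.inr (ih.2 (fun h' => hfin (by rw [h', step_top])) (Or.inl ⟨by omega, hs.2⟩))
      · exact Or.inl hs.2

lemma Phi_a0 (GM : Good p q m uM uM') (GN : Good p q n uN uN') (b x : ℝ) {j : ℕ} (hj : 2 ≤ j) :
    PhiGt uM uN 0 b j x = ⊤ := by
  have h1 : PhiGt uM uN 0 b 1 x = ⊤ := by
    rw [Phi_even _ _ rfl]
    change phiStep uM 0 (x : EReal) = ⊤
    rw [step_coe, GM.phi_c0]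
  have := Phi_mono_j GM GN 0 b x (by omega : 1 ≤ j)
  simp only [h1] at this
  exact top_le_iff.1 this

lemma Phi_b0 (GM : Good p q m uM uM') (GN : Good p q n uN uN') (a x : ℝ) {j : ℕ} (hj : 2 ≤ j) :
    PhiGt uM uN a 0 j x = ⊤ := by
  have h1 : PhiGt uM uN a 0 2 x = ⊤ := by
    rw [Phi_odd _ _ (by decide)]
    have hb := Phi_ne_bot GM GN a 0 1 x
    generalize PhiGt uM uN a 0 1 x = y at hb ⊢
    by_cases h : y = ⊤
    · rw [h, step_top]
    · lift y to ℝ using ⟨h, hb⟩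
      rw [step_coe, GN.phi_c0]
  have := Phi_mono_j GM GN a 0 x hj
  simp only [h1] at this
  exact top_le_iff.1 this

lemma Phi_fin_prev (GM : Good p q m uM uM') (GN : Good p q n uN uN') {a b x z : ℝ} {i j : ℕ}
    (hij : i ≤ j) (h : PhiGt uM uN a b j x = z) : ∃ y : ℝ, PhiGt uM uN a b i x = y := by
  have h1 := Phi_mono_j GM GN a b x hij
  simp only [h] at h1
  have hb := Phi_ne_bot GM GN a b i x
  have ht : PhiGt uM uN a b i x ≠ ⊤ := fun h' => by simp [h'] at h1
  exact ⟨_, (EReal.coe_toReal ht hb).symm⟩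

lemma Phi_expand (GM : Good p q m uM uM') (GN : Good p q n uN uN') {l : Filter ℝ}
    {a b : ℝ → ℝ} {a0 b0 : ℝ} (ha0 : 0 < a0) (hb0 : 0 < b0)
    (ha : Tendsto a l (nhds a0)) (hb : Tendsto b l (nhds b0)) (x : ℝ)
    (j : ℕ) : ∀ z0 : ℝ, PhiGt uM uN a0 b0 j x = z0 →
    ∃ (P Q : ℝ → ℝ) (P0 Q0 : ℝ), 0 ≤ P0 ∧ 0 ≤ Q0 ∧ (1 ≤ j → 0 < P0) ∧ (2 ≤ j → 0 < Q0) ∧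
      Tendsto P l (nhds P0) ∧ Tendsto Q l (nhds Q0) ∧
      ∀ᶠ i in l, ∀ z : ℝ, PhiGt uM uN (a i) (b i) j x = z →
        z - z0 = -(P i) * (a i - a0) - Q i * (b i - b0) := by
  induction j with
  | zero =>
    intro z0 hz0
    refine ⟨fun _ => 0, fun _ => 0, 0, 0, le_rfl, le_rfl, by omega, by omega, tendsto_const_nhds,
      tendsto_const_nhds, Eventually.of_forall fun i z hz => ?_⟩
    have h1 : (x : EReal) = z0 := hz0
    have h2 : (x : EReal) = z := hz
    rw [EReal.coe_eq_coe_iff] at h1 h2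
    simp [← h1, ← h2]
  | succ j ih =>
    intro z0 hz0
    obtain ⟨y0, hy0⟩ := Phi_fin_prev GM GN (Nat.le_succ j) hz0
    obtain ⟨P, Q, P0, Q0, hP0, hQ0, hP1, hQ2, hPt, hQt, hE⟩ := ih y0 hy0
    have hyt : Tendsto (fun i => (PhiGt uM uN (a i) (b i) j x).toReal) l (nhds y0) := by
      have := (EReal.tendsto_toReal (a := PhiGt uM uN a0 b0 j x) (by rw [hy0]; simp)
        (by rw [hy0]; simp)).comp (Phi_tendsto GM GN ha hb x j)
      rw [hy0] at this
      exact this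
    by_cases h : j % 2 = 0
    · rw [Phi_even _ _ h, hy0, step_coe] at hz0
      obtain ⟨α, β, α0, β0, hα, hβ, hαt, hβt, he⟩ := GM.expand ha0 hz0
      have ht := ha.prodMk_nhds hyt
      have k1 := hαt.comp ht
      have k2 := hβt.comp ht
      refine ⟨_, _, _, _, ?_, ?_, ?_, ?_, (k1.mul hPt).add k2, k1.mul hQt, ?_⟩
      · positivity
      · positivity
      · intro _; positivity
      · intro _; exact mul_pos hα (hQ2 (by omega))
      · filter_upwards [hE, ht.eventually he] with i h1 h2 z hz
        obtain ⟨y, hy⟩ := Phi_fin_prev GM GN (Nat.le_succ j) hz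
        rw [Phi_even _ _ h, hy, step_coe] at hz
        have e1 := h1 y hy
        have e2 := h2 z (by simp only [hy, EReal.toReal_coe]; exact hz)
        simp only [hy, EReal.toReal_coe, Function.comp] at e2 ⊢
        rw [e2, e1]; ring
    · rw [Phi_odd _ _ h, hy0, step_coe] at hz0
      obtain ⟨α, β, α0, β0, hα, hβ, hαt, hβt, he⟩ := GN.expand hb0 hz0
      have ht := hb.prodMk_nhds hyt
      have k1 := hαt.comp ht
      have k2 := hβt.comp ht
      refine ⟨_, _, _, _, ?_, ?_, ?_, ?_, k1.mul hPt, (k1.mul hQt).add k2, ?_⟩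
      · positivity
      · positivity
      · intro _; exact mul_pos hα (hP1 (by omega))
      · intro _; positivity
      · filter_upwards [hE, ht.eventually he] with i h1 h2 z hz
        obtain ⟨y, hy⟩ := Phi_fin_prev GM GN (Nat.le_succ j) hz
        rw [Phi_odd _ _ h, hy, step_coe] at hz
        have e1 := h1 y hy
        have e2 := h2 z (by simp only [hy, EReal.toReal_coe]; exact hz)
        simp only [hy, EReal.toReal_coe, Function.comp] at e2 ⊢
        rw [e2, e1]; ring

lemma a_bound (GM : Good p q m uM uM') (GN : Good p q n uN uN') {a b x z lam : ℝ} {j : ℕ}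
    (hj : 2 ≤ j) (ha : 0 < a) (h : PhiGt uM uN a b j x = z) (hlam : phiE uM lam x = z) :
    lam < a := by
  by_contra hh
  push Not at hh
  have h1 : PhiGt uM uN a b 1 x = phiE uM a x := by
    rw [Phi_even _ _ rfl]; exact step_coe uM a x
  obtain ⟨y, hy⟩ := Phi_fin_prev GM GN (by omega : 1 ≤ j) h
  have h2 : PhiGt uM uN a b 1 x < PhiGt uM uN a b 2 x := by
    rw [Phi_odd a b (j := 1) (by decide)]
    exact lt_step GN b (by rw [hy]; simp) (by rw [hy]; simp)
  have h3 := Phi_mono_j GM GN a b x hj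
  simp only [h] at h3
  have h4 := GM.anti_c_weak (s := x) ha hh
  rw [hlam, ← h1] at h4
  exact absurd (h2.trans_le h3) (not_lt.2 h4)

lemma b_bound (GM : Good p q m uM uM') (GN : Good p q n uN uN') {a b x z lam : ℝ} {j : ℕ}
    (hj : 2 ≤ j) (hb : 0 < b) (h : PhiGt uM uN a b j x = z) (hlam : phiE uN lam x = z) :
    lam < b := by
  by_contra hh
  push Not at hh
  obtain ⟨y, hy⟩ := Phi_fin_prev GM GN (by omega : 1 ≤ j) h
  obtain ⟨y2, hy2⟩ := Phi_fin_prev GM GN hj h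
  have h3 := Phi_mono_j GM GN a b x hj
  simp only [h, hy2] at h3
  have hxy : x < y := by
    have : PhiGt uM uN a b 1 x = phiE uM a x := by
      rw [Phi_even _ _ rfl]; exact step_coe uM a x
    have h5 := GM.self_lt_phi a x
    rw [← this, hy] at h5
    exact EReal.coe_lt_coe_iff.1 h5
  rw [Phi_odd a b (j := 1) (by decide), hy, step_coe] at hy2
  have h6 := GN.mono_s hxy hy2
  rw [hy2] at h6
  have h4 := GN.anti_c_weak (s := x) hb hh
  rw [hlam] at h4
  exact absurd (h6.trans_le h3) (not_lt.2 h4)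

end two

lemma set_Ioi {A : Set ℝ} {lam : ℝ} (hne : A.Nonempty) (hl : ∀ a ∈ A, lam < a)
    (hup : ∀ a ∈ A, ∀ a', a < a' → a' ∈ A) (hop : ∀ a ∈ A, ∃ a' ∈ A, a' < a) :
    ∃ ν, lam ≤ ν ∧ A = Ioi ν := by
  have hbd : BddBelow A := ⟨lam, fun a ha => (hl a ha).le⟩
  refine ⟨sInf A, le_csInf hne fun a ha => (hl a ha).le, ?_⟩
  ext a
  constructor
  · intro ha
    obtain ⟨a', h1, h2⟩ := hop a ha
    exact (csInf_le hbd h1).trans_lt h2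
  · intro ha
    obtain ⟨a', h1, h2⟩ := exists_lt_of_csInf_lt hne ha
    exact hup a' h1 a h2

lemma ivt_zero {g : ℝ → EReal} (hg : Continuous g) {T b : ℝ} (hb : 0 < b) (h0 : g 0 = ⊤)
    (h : g b < T) : ∃ b' > 0, g b' = T := by
  have := intermediate_value_Icc' hb.le hg.continuousOn
  obtain ⟨x, hx, hxT⟩ := this ⟨h.le, by rw [h0]; exact le_top⟩
  refine ⟨x, lt_of_le_of_ne hx.1 ?_, hxT⟩
  rintro rfl
  rw [h0] at hxT
  exact absurd hxT.symm (by simp)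

lemma curve_half {F : ℝ → ℝ → EReal} (hF : Continuous fun y : ℝ × ℝ => F y.1 y.2) {T lam : ℝ}
    (h0 : ∀ a, F a 0 = ⊤)
    (hmono : ∀ a b a' b', 0 < a → 0 < b → a ≤ a' → b ≤ b' → (a < a' ∨ b < b') → F a b ≤ T →
      F a' b' < T)
    (hl : ∀ a b, 0 < a → 0 < b → F a b = T → lam < a)
    (hne : ∃ a b, 0 < a ∧ 0 < b ∧ F a b = T) :
    ∃ ν, lam ≤ ν ∧ {a | 0 < a ∧ ∃ b > 0, F a b = T} = Ioi ν := by
  apply set_Ioi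
  · obtain ⟨a, b, h1, h2, h3⟩ := hne
    exact ⟨a, h1, b, h2, h3⟩
  · rintro a ⟨h1, b, h2, h3⟩; exact hl a b h1 h2 h3
  · rintro a ⟨h1, b, h2, h3⟩ a' haa
    refine ⟨h1.trans haa, ?_⟩
    exact ivt_zero (g := F a') (hF.comp (by fun_prop : Continuous fun b : ℝ => (a', b))) h2 (h0 a')
      (hmono a b a' b h1 h2 haa.le le_rfl (Or.inl haa) h3.le)
  · rintro a ⟨h1, b, h2, h3⟩
    have h4 := hmono a b a (b + 1) h1 h2 le_rfl (by linarith) (Or.inr (by linarith)) h3.le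
    have hc : Continuous fun a => F a (b + 1) :=
      hF.comp (by fun_prop : Continuous fun a : ℝ => (a, b + 1))
    have e1 : ∀ᶠ a' in nhdsWithin a (Iio a), F a' (b + 1) < T :=
      eventually_nhdsWithin_of_eventually_nhds ((hc.tendsto a).eventually (gt_mem_nhds h4))
    have e2 : ∀ᶠ a' in nhdsWithin a (Iio a), 0 < a' :=
      eventually_nhdsWithin_of_eventually_nhds (lt_mem_nhds h1)
    obtain ⟨a', ⟨k1, k2⟩, k3⟩ := ((e1.and e2).and self_mem_nhdsWithin).exists
    refine ⟨a', ⟨k2, ?_⟩, k3⟩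
    exact ivt_zero (g := F a') (hF.comp (by fun_prop : Continuous fun b : ℝ => (a', b)))
      (by linarith : 0 < b + 1) (h0 a') k1

lemma curve {F : ℝ → ℝ → EReal} (hF : Continuous fun y : ℝ × ℝ => F y.1 y.2) {T lam lam' : ℝ}
    (h0 : ∀ a, F a 0 = ⊤) (h0' : ∀ b, F 0 b = ⊤)
    (hmono : ∀ a b a' b', 0 < a → 0 < b → a ≤ a' → b ≤ b' → (a < a' ∨ b < b') → F a b ≤ T →
      F a' b' < T)
    (hl : ∀ a b, 0 < a → 0 < b → F a b = T → lam < a)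
    (hl' : ∀ a b, 0 < a → 0 < b → F a b = T → lam' < b)
    (hne : ∃ a b, 0 < a ∧ 0 < b ∧ F a b = T) :
    ∃ ν μ : ℝ, lam ≤ ν ∧ lam' ≤ μ ∧ ∃ f : ℝ → ℝ, StrictAntiOn f (Ioi ν) ∧ f '' (Ioi ν) = Ioi μ ∧
      (∀ a b, (0 < a ∧ 0 < b ∧ F a b = T) ↔ ν < a ∧ b = f a) ∧
      (∀ x ∈ Ioi ν, ContinuousAt f x) ∧ Tendsto f (nhdsWithin ν (Ioi ν)) atTop := by
  obtain ⟨ν, hν, hA⟩ := curve_half hF h0 hmono hl hne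
  obtain ⟨μ, hμ, hB⟩ := curve_half (F := fun b a => F a b) (lam := lam')
    (hF.comp continuous_swap) h0'
    (fun b a b' a' h1 h2 h3 h4 h5 => hmono a b a' b' h2 h1 h4 h3 h5.symm)
    (fun b a h1 h2 => hl' a b h2 h1)
    (by obtain ⟨a, b, h1, h2, h3⟩ := hne; exact ⟨b, a, h2, h1, h3⟩)
  have hAm : ∀ a, ν < a ↔ (0 < a ∧ ∃ b > 0, F a b = T) := fun a => by
    have : a ∈ {a | 0 < a ∧ ∃ b > 0, F a b = T} ↔ a ∈ Ioi ν := by rw [hA]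
    exact this.symm
  have hBm : ∀ b, μ < b ↔ (0 < b ∧ ∃ a > 0, F a b = T) := fun b => by
    have : b ∈ {b | 0 < b ∧ ∃ a > 0, F a b = T} ↔ b ∈ Ioi μ := by rw [hB]
    exact this.symm
  have hex : ∀ a, ∃ b, ν < a → (0 < a ∧ 0 < b ∧ F a b = T) := fun a => by
    by_cases h : ν < a
    · obtain ⟨h1, b, h2, h3⟩ := (hAm a).1 h
      exact ⟨b, fun _ => ⟨h1, h2, h3⟩⟩
    · exact ⟨0, fun h' => absurd h' h⟩
  choose f hf using hex
  have hiff : ∀ a b, (0 < a ∧ 0 < b ∧ F a b = T) ↔ ν < a ∧ b = f a := by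
    intro a b
    constructor
    · rintro ⟨h1, h2, h3⟩
      have h4 : ν < a := (hAm a).2 ⟨h1, b, h2, h3⟩
      obtain ⟨-, h5, h6⟩ := hf a h4
      refine ⟨h4, ?_⟩
      rcases lt_trichotomy b (f a) with h | h | h
      · have := hmono a b a (f a) h1 h2 le_rfl h.le (Or.inr h) h3.le
        rw [h6] at this
        exact absurd this (lt_irrefl _)
      · exact h
      · have := hmono a (f a) a b h1 h5 le_rfl h.le (Or.inr h) h6.le
        rw [h3] at this
        exact absurd this (lt_irrefl _)
    · rintro ⟨h1, rfl⟩; exact hf a h1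
  have hanti : StrictAntiOn f (Ioi ν) := by
    intro a ha a' ha' haa
    obtain ⟨h1, h2, h3⟩ := hf a ha
    obtain ⟨h1', h2', h3'⟩ := hf a' ha'
    by_contra hh
    push Not at hh
    have := hmono a (f a) a' (f a') h1 h2 haa.le hh (Or.inl haa) h3.le
    rw [h3'] at this
    exact absurd this (lt_irrefl _)
  have himg : f '' (Ioi ν) = Ioi μ := by
    ext b
    constructor
    · rintro ⟨a, ha, rfl⟩
      obtain ⟨h1, h2, h3⟩ := hf a ha
      exact (hBm _).2 ⟨h2, a, h1, h3⟩
    · intro hb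
      obtain ⟨h1, a, h2, h3⟩ := (hBm b).1 hb
      obtain ⟨h4, h5⟩ := (hiff a b).1 ⟨h2, h1, h3⟩
      exact ⟨a, h4, h5.symm⟩
  refine ⟨ν, μ, hν, hμ, f, hanti, himg, hiff, ?_, ?_⟩
  · intro x hx
    have hg : StrictMonoOn (fun x => -f x) (Ioi ν) := fun a ha b hb hab =>
      neg_lt_neg (hanti ha hb hab)
    have hgi : (fun x => -f x) '' (Ioi ν) = Iio (-μ) := by
      rw [show (fun x => -f x) = Neg.neg ∘ f from rfl, image_comp, himg]
      simp
    have := hg.continuousAt_of_image_mem_nhds (Ioi_mem_nhds hx) (by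
      rw [hgi]
      apply Iio_mem_nhds
      have : f x ∈ Ioi μ := himg ▸ mem_image_of_mem f hx
      exact neg_lt_neg this)
    have h2 := this.neg
    have h3 : -(fun x => -f x) = f := by ext y; simp
    rwa [h3] at h2
  · rw [tendsto_atTop]
    intro M
    have : max M (μ + 1) ∈ Ioi μ := lt_of_lt_of_le (lt_add_one μ) (le_max_right _ _)
    rw [← himg] at this
    obtain ⟨x0, hx0, hM⟩ := this
    filter_upwards [Ioo_mem_nhdsGT hx0] with x hx
    have := hanti hx.1 hx0 hx.2
    exact (le_max_left M (μ + 1)).trans (hM ▸ this.le)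

/-- If `k ≥ 2` and `C_k^{>++}` is nonempty, then it is a
hyperbolic-like curve: there are `ν_k ≥ λ₁^m`, `μ_k ≥ λ₁^n` and a strictly
decreasing `C¹` function `f_k : (ν_k,∞) → (μ_k,∞)`, onto, with `f_k' < 0`,
whose graph is exactly `C_k^{>++}`; moreover `f_k(x) → +∞` as `x → ν_k⁺`.
Here `λ₁^m` (resp. `λ₁^n`) is the unique positive `a` with `φ_a^m(T₁) = T₂`
(resp. `φ_b^n(T₁) = T₂`). -/
theorem CGt_is_hyperbolic_curve
    (p q m n : ℝ → ℝ) (uM uM' uN uN' : ℝ → ℝ → ℝ → ℝ) (T₁ T₂ lam1M lam1N : ℝ)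
    (k : ℕ) (hk : 2 ≤ k) (hT : T₁ < T₂)
    (hp : Continuous p) (hq : Continuous q) (hm : Continuous m) (hn : Continuous n)
    (hppos : ∀ t, 0 < p t) (hqnn : ∀ t, 0 ≤ q t)
    (hM : IsSolFamily p q m uM uM') (hN : IsSolFamily p q n uN uN')
    (hcM : Continuous fun x : ℝ × ℝ × ℝ => uM x.1 x.2.1 x.2.2)
    (hcM' : Continuous fun x : ℝ × ℝ × ℝ => uM' x.1 x.2.1 x.2.2)
    (hcN : Continuous fun x : ℝ × ℝ × ℝ => uN x.1 x.2.1 x.2.2)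
    (hcN' : Continuous fun x : ℝ × ℝ × ℝ => uN' x.1 x.2.1 x.2.2)
    (hmplus : ∃ t ∈ Ioo T₁ T₂, 0 < m t) (hnplus : ∃ t ∈ Ioo T₁ T₂, 0 < n t)
    (hlamM : 0 < lam1M ∧ phiE uM lam1M T₁ = (T₂ : EReal))
    (hlamN : 0 < lam1N ∧ phiE uN lam1N T₁ = (T₂ : EReal))
    (hne : (CGt uM uN T₁ T₂ k).Nonempty) :
    ∃ ν μ : ℝ, lam1M ≤ ν ∧ lam1N ≤ μ ∧
      ∃ f : ℝ → ℝ,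
        StrictAntiOn f (Ioi ν) ∧
        (∀ x ∈ Ioi ν, ∃ d : ℝ, d < 0 ∧ HasDerivAt f d x) ∧
        f '' (Ioi ν) = Ioi μ ∧
        CGt uM uN T₁ T₂ k = {ab : ℝ × ℝ | ab.1 ∈ Ioi ν ∧ ab.2 = f ab.1} ∧
        Tendsto f (nhdsWithin ν (Ioi ν)) atTop := by
  have GM : Good p q m uM uM' := ⟨hp, hq, hm, hppos, hqnn, hM, hcM, hcM'⟩
  have GN : Good p q n uN uN' := ⟨hp, hq, hn, hppos, hqnn, hN, hcN, hcN'⟩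
  obtain ⟨ν, μ, hν, hμ, f, hanti, himg, hiff, hcont, htop⟩ :=
    curve (F := fun a b => PhiGt uM uN a b k (T₁ : EReal)) (T := T₂) (lam := lam1M) (lam' := lam1N)
      (continuous_iff_continuousAt.2 fun y =>
        Phi_tendsto GM GN (continuous_fst.tendsto y) (continuous_snd.tendsto y) T₁ k)
      (fun a => Phi_b0 GM GN a T₁ hk) (fun b => Phi_a0 GM GN b T₁ hk)
      (fun a b a' b' ha hb haa hbb hs hle => by
        refine lt_of_lt_of_le ((Phi_anti GM GN ha hb haa hbb T₁ k).2 ?_ ?_) hle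
        · intro h'; rw [h'] at hle; simp at hle
        · rcases hs with hs | hs
          · exact Or.inl ⟨by omega, hs⟩
          · exact Or.inr ⟨hk, hs⟩)
      (fun a b ha _ h => a_bound GM GN hk ha h hlamM.2)
      (fun a b _ hb h => b_bound GM GN hk hb h hlamN.2)
      (by obtain ⟨⟨a, b⟩, h1, h2, h3⟩ := hne; exact ⟨a, b, h1, h2, h3⟩)
  refine ⟨ν, μ, hν, hμ, f, hanti, ?_, himg, ?_, htop⟩
  · intro x hx
    obtain ⟨h1, h2, h3⟩ := (hiff x (f x)).2 ⟨hx, rfl⟩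
    obtain ⟨P, Q, P0, Q0, -, -, hP, hQ, hPt, hQt, hE⟩ :=
      Phi_expand GM GN (l := nhds x) (a := fun y => y) (b := f) h1 h2 tendsto_id (hcont x hx) T₁ k T₂ h3
    have hP := hP (by omega)
    have hQ := hQ hk
    refine ⟨-(P0 / Q0), neg_neg_of_pos (div_pos hP hQ), ?_⟩
    rw [hasDerivAt_iff_tendsto_slope]
    have ht : Tendsto (fun y => -(P y / Q y)) (nhdsWithin x {x}ᶜ) (nhds (-(P0 / Q0))) :=
      ((hPt.div hQt hQ.ne').neg).mono_left nhdsWithin_le_nhds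
    refine ht.congr' ?_
    have e1 : ∀ᶠ y in nhds x, 0 < Q y := hQt.eventually (lt_mem_nhds hQ)
    have e2 : ∀ᶠ y in nhds x, ν < y := lt_mem_nhds hx
    filter_upwards [nhdsWithin_le_nhds hE, nhdsWithin_le_nhds e1, nhdsWithin_le_nhds e2,
      self_mem_nhdsWithin] with y h4 h5 h6 h7
    have h8 := h4 T₂ ((hiff y (f y)).2 ⟨h6, rfl⟩).2.2
    have h9 : y - x ≠ 0 := sub_ne_zero.2 h7
    rw [slope_def_field, eq_div_iff h9]
    field_simp
    linarith
  · ext ⟨a, b⟩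
    exact hiff a b
end
end
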